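/- For every k ≥ 0 and every c ∈ C^k(A,M), the element dc defined by the formulas below lies in C^{k+1}(A,M) (i.e., it satisfies conditions B1, B2, B3) and d(dc) = 0. Hence (C^•(A,M), d) is a cohomology complex. -/

import Mathlib

namespace LCC

/-! ### Index utilities -/

/-- Skip one index: the increasing enumeration of `{0,…,k} \ {i}`. -/
def skip1 (i r : ℕ) : ℕ := if r < i then r else r + 1

/-- Skip two indices `i < j`: the increasing enumeration of `{0,…,k+1} \ {i,j}`. -/
def skip2 (i j r : ℕ) : ℕ := if r < i then r else if r + 1 < j then r + 1 else r + 2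

/-- Remove the `i`-th entry of a tuple. -/
def rm1 {α : Type*} {k : ℕ} (i : ℕ) (a : Fin (k+1) → α) : Fin k → α :=
  fun r => a ⟨skip1 i r.1, by have := r.2; unfold skip1; split <;> omega⟩

/-- Remove the `i`-th and `j`-th entries (for `i < j`) of a tuple. -/
def rm2 {α : Type*} {k : ℕ} (i j : ℕ) (a : Fin (k+2) → α) : Fin k → α :=
  fun r => a ⟨skip2 i j r.1, by
    have := r.2; unfold skip2; split
    · omega
    · split <;> omega⟩

/-- Total weight of a multi-index. -/
def wt {k : ℕ} (ν : Fin k → ℕ) : ℕ := ∑ r, ν r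

/-- The multinomial coefficient `(|m| + s)! / (∏ mᵣ! · s!)`. -/
def mnom {K : ℕ} (m : Fin K → ℕ) (s : ℕ) : ℕ :=
  (wt m + s).factorial / ((∏ r, (m r).factorial) * s.factorial)

variable (F : Type*) [Field F]

/-- A Lie conformal algebra over `F`: an `F[∂]`-module `A` (given by the linear
endomorphism `D`), together with a `λ`-bracket recorded through its coefficients:
`[a_λ b] = ∑ₙ (br a b n) λⁿ`, satisfying sesquilinearity, skew-symmetry and the
Jacobi identity (all written in terms of coefficients of the `λ`-expansions). -/
structure LCA (A : Type*) [AddCommGroup A] [Module F A] where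
  D : A →ₗ[F] A
  br : A →ₗ[F] A →ₗ[F] (ℕ → A)
  br_fin : ∀ a b, (Function.support (br a b)).Finite
  sesq_left_zero : ∀ a b, br (D a) b 0 = 0
  sesq_left : ∀ a b n, br (D a) b (n+1) = - br a b n
  sesq_right : ∀ a b n, br a (D b) n
      = D (br a b n) + (if n = 0 then 0 else br a b (n-1))
  skew : ∀ a b m, br a b m
      = - ∑ᶠ n, ((-1 : F)^n * (n.choose m : F)) • ((D ^ (n - m)) (br b a n))
  jacobi : ∀ a b c m n,
      br a (br b c n) m - br b (br a c m) n
        = ∑ j ∈ Finset.range (m+1), (((n+j).choose j : F)) • br (br a b (m-j)) c (n+j)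

/-- A module over a Lie conformal algebra: an `F[∂]`-module `M` with a `λ`-action
of `A`, given through the coefficients `a_λ v = ∑ₙ (act a v n) λⁿ`, satisfying
sesquilinearity and the Jacobi identity. -/
structure LCAMod {A : Type*} [AddCommGroup A] [Module F A] (L : LCA F A)
    (M : Type*) [AddCommGroup M] [Module F M] where
  D : M →ₗ[F] M
  act : A →ₗ[F] M →ₗ[F] (ℕ → M)
  act_fin : ∀ a m, (Function.support (act a m)).Finite
  sesq_left_zero : ∀ a m, act (L.D a) m 0 = 0
  sesq_left : ∀ a m n, act (L.D a) m (n+1) = - act a m n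
  sesq_right : ∀ a m n, act a (D m) n
      = D (act a m n) + (if n = 0 then 0 else act a m (n-1))
  jacobi : ∀ a b v p q,
      act a (act b v q) p - act b (act a v p) q
        = ∑ j ∈ Finset.range (p+1), (((q+j).choose j : F)) • act (L.br a b (p-j)) v (q+j)

variable {F}
variable {A M : Type*} [AddCommGroup A] [Module F A] [AddCommGroup M] [Module F M]

/-- Torsion elements of the `F[∂]`-module `A`. -/
def IsTor (L : LCA F A) (x : A) : Prop :=
  ∃ p : Polynomial F, p ≠ 0 ∧ Polynomial.aeval L.D p x = 0

/-- `A` decomposes, as an `F[∂]`-module, into the direct sum of its torsion and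
a free complementary submodule `F[∂] ⊗ U`. -/
def Decomposes (L : LCA F A) : Prop :=
  ∃ U : Submodule F A, Function.Bijective
    (fun p : {x : A // IsTor L x} × (ℕ →₀ U) =>
      (p.1 : A) + p.2.sum (fun n u => (L.D ^ n) (u : A)))

variable {L : LCA F A}

/-- The condition for a coefficient family
`γ : A^{⊗ k} → F[λ₁,…,λ_k] ⊗ M` (recorded via the coefficients
`γ a ν` of `λ^ν`) to be a basic `k`-cochain: `F`-multilinearity, polynomiality,
sesquilinearity (A1) and skew-symmetry (A2). -/
structure IsGamma (R : LCAMod F L M) (k : ℕ)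
    (γ : (Fin k → A) → (Fin k → ℕ) → M) : Prop where
  map_add : ∀ (a : Fin k → A) (i : Fin k) (x y : A),
    γ (Function.update a i (x + y)) = γ (Function.update a i x) + γ (Function.update a i y)
  map_smul : ∀ (a : Fin k → A) (i : Fin k) (r : F) (x : A),
    γ (Function.update a i (r • x)) = r • γ (Function.update a i x)
  fin : ∀ a, (Function.support (γ a)).Finite
  sesq : ∀ (a : Fin k → A) (i : Fin k) (x : A) (ν : Fin k → ℕ),
    γ (Function.update a i (L.D x)) ν
      = (if ν i = 0 then 0 else - γ (Function.update a i x) (Function.update ν i (ν i - 1)))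
  skew : ∀ (a : Fin k → A) (ν : Fin k → ℕ) (σ : Equiv.Perm (Fin k)),
    γ (a ∘ σ) (ν ∘ σ) = ((Equiv.Perm.sign σ : ℤˣ) : ℤ) • γ a ν

/-- The action of `∂` on basic cochains: `(∂γ) = (∂^M + λ₁ + ⋯ + λ_k) ∘ γ`,
in terms of coefficients. -/
def GammaD (R : LCAMod F L M) {k : ℕ} (γ : (Fin k → A) → (Fin k → ℕ) → M) :
    (Fin k → A) → (Fin k → ℕ) → M :=
  fun a ν => R.D (γ a ν)
    + ∑ i : Fin k, (if ν i = 0 then 0 else γ a (Function.update ν i (ν i - 1)))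

/-- Substitution of the auxiliary variable `μ` by
`λ† = −λ₁ − ⋯ − λ_K − ∂^M` (with `∂^M` moved to the left) in a polynomial
`q` in `λ₁,…,λ_K, μ`, recorded through its coefficients `q ρ n` of `λ^ρ μ^n`.
The result is the coefficient of `λ^ν`. -/
noncomputable def substDag {K : ℕ} (DM : M →ₗ[F] M)
    (q : (Fin K → ℕ) → ℕ → M) (ν : Fin K → ℕ) : M :=
  ∑ ρ ∈ Finset.Iic ν, ∑ᶠ s : ℕ,
    (((-1 : F)^(wt (fun r => ν r - ρ r) + s)) * (mnom (fun r => ν r - ρ r) s : F)) •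
      ((DM ^ s) (q ρ (wt (fun r => ν r - ρ r) + s)))

/-- The condition for a coefficient family
`c : A^{⊗(k+1)} → F[λ₁,…,λ_k] ⊗ M` to be a `(k+1)`-`λ`-bracket
(an element of `C^{k+1}(A,M)`), i.e. conditions B1, B2, B3 of the paper,
written in terms of the coefficients `c a ν` of `λ^ν`. -/
structure IsCBr (R : LCAMod F L M) (k : ℕ)
    (c : (Fin (k+1) → A) → (Fin k → ℕ) → M) : Prop where
  map_add : ∀ (a : Fin (k+1) → A) (i : Fin (k+1)) (x y : A),
    c (Function.update a i (x + y)) = c (Function.update a i x) + c (Function.update a i y)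
  map_smul : ∀ (a : Fin (k+1) → A) (i : Fin (k+1)) (r : F) (x : A),
    c (Function.update a i (r • x)) = r • c (Function.update a i x)
  fin : ∀ a, (Function.support (c a)).Finite
  sesq₁ : ∀ (a : Fin (k+1) → A) (i : Fin k) (x : A) (ν : Fin k → ℕ),
    c (Function.update a i.castSucc (L.D x)) ν
      = (if ν i = 0 then 0
         else - c (Function.update a i.castSucc x) (Function.update ν i (ν i - 1)))
  sesq₂ : ∀ (a : Fin (k+1) → A) (x : A) (ν : Fin k → ℕ),
    c (Function.update a (Fin.last k) (L.D x)) ν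
      = R.D (c (Function.update a (Fin.last k) x) ν)
        + ∑ i : Fin k, (if ν i = 0 then 0
            else c (Function.update a (Fin.last k) x) (Function.update ν i (ν i - 1)))
  skew : ∀ (a : Fin (k+1) → A) (ν : Fin k → ℕ) (σ : Equiv.Perm (Fin (k+1))),
    c a ν = ((Equiv.Perm.sign σ : ℤˣ) : ℤ) • substDag R.D
      (fun ρ n =>
        if (Fin.snoc ρ n : Fin (k+1) → ℕ) (σ (Fin.last k)) = 0 then
          c (a ∘ σ) (fun i : Fin k => (Fin.snoc ρ n : Fin (k+1) → ℕ) (σ i.castSucc))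
        else 0) ν

/-- The subspace `C̄`: poly-`λ`-brackets vanishing whenever one of the arguments is
a torsion element of `A`. -/
def VanishOnTorsion (L : LCA F A) {k : ℕ}
    (c : (Fin (k+1) → A) → (Fin k → ℕ) → M) : Prop :=
  ∀ a ν, (∃ i, IsTor L (a i)) → c a ν = 0

/-- The differential `d : C⁰ = M/∂M → C¹`, `(d∫m)(a) = a_{−∂^M} m`. -/
noncomputable def dZero (R : LCAMod F L M) (m : M) :
    (Fin 1 → A) → (Fin 0 → ℕ) → M :=
  fun a _ => ∑ᶠ n, ((-1 : F)^n) • ((R.D ^ n) (R.act (a 0) m n))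

/-- The second term of the differential `d` of the complex of
poly-`λ`-brackets (the double sum over `i < j` in the paper's formula). -/
noncomputable def dPair (L : LCA F A) (R : LCAMod F L M) :
    ∀ {k : ℕ}, ((Fin (k+1) → A) → (Fin k → ℕ) → M) →
      (Fin (k+2) → A) → (Fin (k+1) → ℕ) → M
  | 0, _, _, _ => 0
  | (s+1), c, a, ν =>
    ∑ i : Fin (s+2), ∑ j : Fin (s+2),
      if i < j then
        ((-1 : F)^(s + i.1 + j.1 + 1)) •
          ∑ p ∈ Finset.range (ν i + 1),
            substDag R.D
              (fun ρ n =>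
                if ρ i = 0 ∧ ρ j = 0 then
                  c (Fin.snoc (Fin.snoc (rm2 i.1 j.1 (Fin.init a)) (a (Fin.last (s+2))))
                      (L.br (a i.castSucc) (a j.castSucc) p))
                    (Fin.snoc (rm2 i.1 j.1 ρ) n)
                else 0)
              (Function.update ν i (ν i - p))
      else 0

/-- The differential `d` on the complex `C^•(A,M)` of poly-`λ`-brackets,
written in terms of coefficients (formula (1.8) of the paper). Here `c` is a
`(k+1)`-`λ`-bracket and `dRaw c` is a `(k+2)`-`λ`-bracket. -/
noncomputable def dRaw (L : LCA F A) (R : LCAMod F L M) {k : ℕ}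
    (c : (Fin (k+1) → A) → (Fin k → ℕ) → M) :
    (Fin (k+2) → A) → (Fin (k+1) → ℕ) → M :=
  fun a ν =>
    (∑ i : Fin (k+1), ((-1 : F)^i.1) •
        R.act (a i.castSucc) (c (rm1 i.1 a) (rm1 i.1 ν)) (ν i))
    + dPair L R c a ν
    + ((-1 : F)^(k+1)) • substDag R.D
        (fun ρ n =>
          if ρ (Fin.last k) = 0 then
            R.act (a (Fin.last (k+1))) (c (Fin.init a) (Fin.init ρ)) n
          else 0) ν
    + ∑ i : Fin (k+1), ((-1 : F)^(i.1+1)) •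
        c (Fin.snoc (rm1 i.1 (Fin.init a)) (L.br (a i.castSucc) (a (Fin.last (k+1))) (ν i)))
          (rm1 i.1 ν)

/-- The second term of the differential `δ` of the basic complex
`Γ̃^•(A,M)` (the double sum over `i < j`). -/
noncomputable def deltaPair (L : LCA F A) (R : LCAMod F L M) :
    ∀ {k : ℕ}, ((Fin k → A) → (Fin k → ℕ) → M) →
      (Fin (k+1) → A) → (Fin (k+1) → ℕ) → M
  | 0, _, _, _ => 0
  | (s+1), γ, a, ν =>
    ∑ i : Fin (s+2), ∑ j : Fin (s+2),
      if i < j then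
        ((-1 : F)^(s + i.1 + j.1)) •
          ∑ p ∈ Finset.range (ν i + 1),
            ((((ν i - p) + ν j).choose (ν i - p) : F)) •
              γ (Fin.snoc (rm2 i.1 j.1 a) (L.br (a i) (a j) p))
                (Fin.snoc (rm2 i.1 j.1 ν) ((ν i - p) + ν j))
      else 0

/-- The differential `δ` of the basic Lie conformal algebra cohomology complex
`Γ̃^•(A,M)`, written in terms of coefficients of the `λ`-expansions. -/
noncomputable def deltaRaw (L : LCA F A) (R : LCAMod F L M) {k : ℕ}
    (γ : (Fin k → A) → (Fin k → ℕ) → M) :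
    (Fin (k+1) → A) → (Fin (k+1) → ℕ) → M :=
  fun a ν =>
    (∑ i : Fin (k+1), ((-1 : F)^i.1) •
        R.act (a i) (γ (rm1 i.1 a) (rm1 i.1 ν)) (ν i))
    + deltaPair L R γ a ν

/-- The map `ψ^{k+1} : Γ̃^{k+1}(A,M) → C^{k+1}(A,M)`,
`{a₁ λ₁ ⋯ a_k λ_k a_{k+1}}_{ψ(γ)} = γ_{λ₁,…,λ_k,λ†}(a₁,…,a_{k+1})`
where `λ† = −λ₁ − ⋯ − λ_k − ∂^M` (with `∂^M` moved to the left). -/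
noncomputable def psiRaw (R : LCAMod F L M) {k : ℕ}
    (γ : (Fin (k+1) → A) → (Fin (k+1) → ℕ) → M) :
    (Fin (k+1) → A) → (Fin k → ℕ) → M :=
  fun a ν => substDag R.D (fun ρ n => γ a (Fin.snoc ρ n)) ν

/-- The map `χ` on "polynomial duals": given
`φ : Hom(F[λ₁,…,λ_K], M)` (recorded through its values `φ ν` on monomials),
`chiMap DM φ` is `φ ∘ (substitution λ_{K+1} ↦ −λ₁ − ⋯ − λ_K + ∂^M)`,
with `∂^M` moved to the left. -/
noncomputable def chiMap {K : ℕ} (DM : M →ₗ[F] M) (φ : (Fin K → ℕ) → M) :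
    (Fin (K+1) → ℕ) → M :=
  fun ν =>
    ∑ m ∈ Finset.Iic (fun _ : Fin K => ν (Fin.last K)),
      if wt m ≤ ν (Fin.last K) then
        (((-1 : F)^(wt m)) * (mnom m (ν (Fin.last K) - wt m) : F)) •
          ((DM ^ (ν (Fin.last K) - wt m)) (φ (fun r => Fin.init ν r + m r)))
      else 0

section Product

variable (F) {N : Type*} [CommRing N] [Algebra F N]

/-- The exterior multiplication of basic cochains, in coefficient form. -/
noncomputable def wedge {h k : ℕ}
    (α : (Fin h → A) → (Fin h → ℕ) → N) (β : (Fin k → A) → (Fin k → ℕ) → N) :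
    (Fin (h+k) → A) → (Fin (h+k) → ℕ) → N :=
  fun a ν =>
    ((h.factorial * k.factorial : F))⁻¹ •
      ∑ σ : Equiv.Perm (Fin (h+k)),
        ((Equiv.Perm.sign σ : ℤˣ) : ℤ) •
          (α (fun i => a (σ (Fin.castAdd k i))) (fun i => ν (σ (Fin.castAdd k i))) *
           β (fun i => a (σ (Fin.natAdd h i))) (fun i => ν (σ (Fin.natAdd h i))))

/-- Contraction of a basic cochain by (a generator of) a basic `h`-chain
`b ⊗ φ ∈ A^{⊗h} ⊗ Hom(F[λ₁,…,λ_h], N)`. -/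
noncomputable def iotaG {h k : ℕ} (b : Fin h → A) (φ : (Fin h → ℕ) → N)
    (γ : (Fin (h + k) → A) → (Fin (h + k) → ℕ) → N) :
    (Fin k → A) → (Fin k → ℕ) → N :=
  fun a ν => ∑ᶠ ρ : Fin h → ℕ, φ ρ * γ (Fin.append b a) (Fin.append ρ ν)

/-- The action of `∂` on (generators of) the space of basic `h`-chains:
`∂(a ⊗ φ) = a ⊗ ((−λ₁^* − ⋯ − λ_h^* + ∂)φ)`. -/
def chainD (R : LCAMod F L N) {h : ℕ} (φ : (Fin h → ℕ) → N) : (Fin h → ℕ) → N :=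
  fun ρ => R.D (φ ρ) - ∑ i : Fin h, φ (Function.update ρ i (ρ i + 1))

/-- Contraction by a basic 1-chain `a₀ ⊗ m(x)`, where `m(x) = ∑ m_k x^k` is recorded
by its coefficient function `m : ℕ → N` (formula (3.23) of the paper, using the
pairing `⟨x^p, λ^q⟩ = q! δ_{p,q}`). -/
noncomputable def iota1 {k : ℕ} (a₀ : A) (m : ℕ → N)
    (γ : (Fin (k+1) → A) → (Fin (k+1) → ℕ) → N) : (Fin k → A) → (Fin k → ℕ) → N :=
  fun a ν => ∑ᶠ q : ℕ, (q.factorial : F) • (m q * γ (Fin.cons a₀ a) (Fin.cons q ν))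

/-- The Lie derivative `L_ξ = δ ∘ ι_ξ + ι_ξ ∘ δ` along a basic 1-chain. -/
noncomputable def lie1 (R : LCAMod F L N) {k : ℕ} (a₀ : A) (m : ℕ → N)
    (γ : (Fin (k+1) → A) → (Fin (k+1) → ℕ) → N) : (Fin (k+1) → A) → (Fin (k+1) → ℕ) → N :=
  deltaRaw L R (iota1 F a₀ m γ) + iota1 F a₀ m (deltaRaw L R γ)

end Product

end LCC

/-!
Let the variables `λᵢ` take values in a commutative `F`-algebra `S`. A `k`-`λ`-bracket becomes a
skew-symmetric function of `k` symbols `a_Λ` with `a ∈ S ⊗ A` and `Λ ∈ S`; its value at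
`a₁_{Λ₁}, …, a_k_{Λ_k}` is taken in `(S ⊗ M) / (∂ + Λ₁ + ⋯ + Λ_k)`, where the substitution
`λ_k† = -λ₁ - ⋯ - λ_{k-1} - ∂` holds automatically, so that the last argument is no longer
distinguished. With the bracket `[a_Λ, b_Γ] = [a_Λ b]_{Λ+Γ}` of symbols, `d` becomes the
Chevalley–Eilenberg differential. For the latter, stability of the cochains, skew-symmetry of `dc`
and `d² = 0` follow by induction on the number of arguments from Cartan's formula
`ι_x d + d ι_x = L_x`. Nothing is lost in the translation: when `S = F[λ₁, …, λ_k]` and the `Λᵢ`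
are the variables, `F[λ₁, …, λ_{k-1}] ⊗ M` embeds in the quotient.
-/

namespace LCC

open scoped TensorProduct
open MvPolynomial (X aeval)

/-! ### The Chevalley–Eilenberg differential on symbols -/

section Skew

variable {G V : Type*} [AddCommGroup V]

/-- Skew-symmetry of a function of `k` arguments. -/
def IsSkew {k : ℕ} (E : (Fin k → G) → V) : Prop :=
  ∀ (x : Fin k → G) (σ : Equiv.Perm (Fin k)),
    E (x ∘ σ) = ((Equiv.Perm.sign σ : ℤˣ) : ℤ) • E x

theorem IsSkew.of_subsingleton {k : ℕ} [Subsingleton (Fin k)] (E : (Fin k → G) → V) :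
    IsSkew E := by
  intro x σ
  simp [Subsingleton.elim σ 1]

theorem IsSkew.sub {k : ℕ} {E E' : (Fin k → G) → V} (h : IsSkew E) (h' : IsSkew E') :
    IsSkew (E - E') := by
  intro x σ
  simp only [Pi.sub_apply, h x σ, h' x σ, smul_sub]

theorem IsSkew.of_swap_castSucc_succ {k : ℕ} {E : (Fin (k + 1) → G) → V}
    (h : ∀ (i : Fin k) x, E (x ∘ Equiv.swap i.castSucc i.succ) = -E x) : IsSkew E := by
  intro x σ
  have hσ : σ ∈ Submonoid.closure
      (Set.range fun i : Fin k => Equiv.swap i.castSucc i.succ) := by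
    rw [Equiv.Perm.mclosure_swap_castSucc_succ]
    trivial
  induction hσ using Submonoid.closure_induction generalizing x with
  | mem σ hσ =>
    obtain ⟨i, rfl⟩ := hσ
    simp [h, Equiv.Perm.sign_swap i.castSucc_lt_succ.ne]
  | one => simp
  | mul σ τ _ _ hσ hτ =>
    rw [Equiv.Perm.coe_mul, ← Function.comp_assoc, hτ, hσ, smul_smul, Equiv.Perm.sign_mul,
      Units.val_mul, mul_comm]

theorem cons_comp_swap {k : ℕ} (x : G) (y : Fin k → G) (i j : Fin k) :
    (Fin.cons x (y ∘ Equiv.swap i j) : Fin (k + 1) → G)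
      = (Fin.cons x y : Fin (k + 1) → G) ∘ Equiv.swap i.succ j.succ := by
  funext r
  refine Fin.cases ?_ (fun r => ?_) r
  · simp [Equiv.swap_apply_of_ne_of_ne, (Fin.succ_ne_zero _).symm]
  · rw [Function.comp_apply, ← (Fin.succ_injective k).map_swap]
    simp

theorem cons_cons_comp_swap {k : ℕ} (x y : G) (z : Fin k → G) :
    (Fin.cons x (Fin.cons y z) : Fin (k + 2) → G) ∘ Equiv.swap 0 1
      = Fin.cons y (Fin.cons x z) := by
  funext r
  refine Fin.cases ?_ (Fin.cases ?_ fun r => ?_) r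
  · simp
  · simp
  · rw [Function.comp_apply, Equiv.swap_apply_of_ne_of_ne (by simp [Fin.ext_iff])
      (by simp [Fin.ext_iff])]
    simp

theorem IsSkew.insertNth {k : ℕ} {E : (Fin (k + 1) → G) → V} (h : IsSkew E) (i : Fin (k + 1))
    (x : G) (y : Fin k → G) :
    E (i.insertNth x y) = (-1 : ℤ) ^ (i : ℕ) • E (Fin.cons x y) := by
  rw [← Fin.insertNth_comp_cycleRange_symm i x y, h]
  simp [smul_smul, ← mul_pow]

theorem IsSkew.insertNth_eq_snoc {k : ℕ} {E : (Fin (k + 1) → G) → V} (h : IsSkew E)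
    (i : Fin (k + 1)) (x : G) (y : Fin k → G) :
    E (i.insertNth x y) = (-1 : ℤ) ^ (k + i : ℕ) • E (Fin.snoc y x) := by
  rw [← Fin.insertNth_last', h.insertNth, h.insertNth, smul_smul, ← pow_add, Fin.val_last,
    show k + i + k = i + 2 * k by ring, pow_add, pow_mul]
  simp

end Skew

section Contract

variable {S G V : Type*} [CommRing S] [AddCommGroup V] [Module S V]

variable (S V) in
/-- The contraction by `x`: substitution of `x` for the first argument. -/
def contract {k : ℕ} (x : G) : ((Fin (k + 1) → G) → V) →ₗ[S] ((Fin k → G) → V) :=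
  LinearMap.funLeft S V fun y => Fin.cons x y

theorem contract_apply {k : ℕ} (x : G) (E : (Fin (k + 1) → G) → V) (y : Fin k → G) :
    contract S V x E y = E (Fin.cons x y) := rfl

theorem ext_contract {k : ℕ} {E E' : (Fin (k + 1) → G) → V}
    (h : ∀ x, contract S V x E = contract S V x E') : E = E' := by
  funext y
  induction y using Fin.consCases with
  | _ x y => exact congrFun (h x) y

theorem IsSkew.of_contract {k : ℕ} {E : (Fin (k + 2) → G) → V}
    (h0 : ∀ x y, contract S V x (contract S V y E) = -contract S V y (contract S V x E))
    (hsucc : ∀ x, IsSkew (contract S V x E)) : IsSkew E := by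
  refine IsSkew.of_swap_castSucc_succ fun i z => ?_
  induction z using Fin.consCases with | _ x z => ?_
  induction i using Fin.cases with
  | zero =>
    induction z using Fin.consCases with | _ y z => ?_
    rw [Fin.castSucc_zero, Fin.succ_zero_eq_one, cons_cons_comp_swap]
    exact congrFun (h0 x y) z
  | succ i =>
    rw [Fin.castSucc_succ, ← cons_comp_swap]
    exact ((hsucc x) z _).trans (by
      simp [Equiv.Perm.sign_swap i.castSucc_lt_succ.ne, contract_apply])

theorem IsSkew.contract {k : ℕ} {E : (Fin (k + 1) → G) → V} (h : IsSkew E)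
    (x : G) : IsSkew (contract S V x E) := by
  intro y σ
  have hcons : (Fin.cons x (y ∘ σ) : Fin (k + 1) → G)
      = (Fin.cons x y : Fin (k + 1) → G) ∘ Equiv.Perm.decomposeFin.symm (0, σ) := by
    funext r
    refine Fin.cases ?_ (fun r => ?_) r <;> simp
  simp only [contract_apply, hcons, h _ (Equiv.Perm.decomposeFin.symm (0, σ)),
    Equiv.Perm.decomposeFin.symm_sign, if_true, one_mul]

theorem IsSkew.contract_contract {k : ℕ} {E : (Fin (k + 2) → G) → V}
    (h : IsSkew E) (x y : G) :
    LCC.contract S V x (LCC.contract S V y E)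
      = -LCC.contract S V y (LCC.contract S V x E) := by
  funext z
  simp only [contract_apply, Pi.neg_apply]
  rw [← cons_cons_comp_swap, h, Equiv.Perm.sign_swap (by simp)]
  simp

end Contract

section Slot

variable {S 𝓐 : Type*} [CommRing S] [AddCommGroup 𝓐] [Module S 𝓐]

/-- The linear functions of one argument `p ∈ 𝓐` which descend to `𝓐 / (D + Λ)𝓐`: this is the
sesquilinearity condition on an argument whose variable `λ` has the value `Λ`. -/
def slot (D : 𝓐 →ₗ[S] 𝓐) (Λ : S) (W : Type*) [AddCommGroup W] [Module S W] :
    Submodule S (𝓐 → W) :=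
  (LinearMap.ker (LinearMap.lcomp S W (D + Λ • LinearMap.id))).map (LinearMap.ltoFun S 𝓐 W S)

variable {D : 𝓐 →ₗ[S] 𝓐} {Λ : S} {W W' : Type*} [AddCommGroup W] [Module S W]
  [AddCommGroup W'] [Module S W']

theorem mem_slot {h : 𝓐 → W} :
    h ∈ slot D Λ W ↔ IsLinearMap S h ∧ ∀ p, h (D p + Λ • p) = 0 := by
  constructor
  · rintro ⟨φ, hφ, rfl⟩
    exact ⟨φ.isLinear, fun p => LinearMap.congr_fun hφ p⟩
  · rintro ⟨hlin, hD⟩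
    exact ⟨hlin.mk' h, LinearMap.ext hD, rfl⟩

theorem coe_mem_slot (φ : 𝓐 →ₗ[S] W) (hφ : ∀ p, φ (D p + Λ • p) = 0) : ⇑φ ∈ slot D Λ W :=
  mem_slot.2 ⟨φ.isLinear, hφ⟩

theorem comp_mem_slot {h : 𝓐 → W} (hh : h ∈ slot D Λ W) (T : W →ₗ[S] W') :
    (fun p => T (h p)) ∈ slot D Λ W' := by
  obtain ⟨φ, hφ, rfl⟩ := hh
  exact coe_mem_slot (T ∘ₗ φ) fun p =>
    (congrArg T (LinearMap.congr_fun hφ p)).trans (map_zero T)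

theorem pi_mem_slot {ι : Type*} {h : 𝓐 → ι → W} (hh : ∀ i, (fun p => h p i) ∈ slot D Λ W) :
    h ∈ slot D Λ (ι → W) := by
  simp only [mem_slot] at hh
  exact mem_slot.2 ⟨⟨fun p q => funext fun i => (hh i).1.map_add p q,
    fun s p => funext fun i => (hh i).1.map_smul s p⟩, fun p => funext fun i => (hh i).2 p⟩

end Slot

/-- An `S`-module `𝓐` with an endomorphism `D`, brackets `[p_Λ q]` and actions `p_Λ v` for every
*value* `Λ ∈ S` of the formal variable, subject to the axioms of a Lie conformal algebra and of a
module. Skew-symmetry holds modulo the image of `D + Λ + Γ`, and the action is on a module `V`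
in which `∂` plays no role any more. -/
structure SymbolSystem (S 𝓐 V : Type*) [CommRing S] [AddCommGroup 𝓐] [Module S 𝓐]
    [AddCommGroup V] [Module S V] where
  D : 𝓐 →ₗ[S] 𝓐
  br : S → 𝓐 →ₗ[S] 𝓐 →ₗ[S] 𝓐
  act : S → 𝓐 →ₗ[S] V →ₗ[S] V
  br_D_left : ∀ Λ p q, br Λ (D p + Λ • p) q = 0
  br_D_right : ∀ Λ Γ p q, br Λ p (D q + Γ • q) = D (br Λ p q) + (Λ + Γ) • br Λ p q
  act_D : ∀ Λ p v, act Λ (D p + Λ • p) v = 0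
  br_skew : ∀ Λ Γ p q, br Λ p q + br Γ q p ∈ LinearMap.range (D + (Λ + Γ) • LinearMap.id)
  br_jacobi : ∀ Λ Γ p q r,
    br Λ p (br Γ q r) - br Γ q (br Λ p r) = br (Λ + Γ) (br Λ p q) r
  act_jacobi : ∀ Λ Γ p q v,
    act Λ p (act Γ q v) - act Γ q (act Λ p v) = act (Λ + Γ) (br Λ p q) v

namespace SymbolSystem

variable {S 𝓐 V : Type*} [CommRing S] [AddCommGroup 𝓐] [Module S 𝓐]
    [AddCommGroup V] [Module S V] (Y : SymbolSystem S 𝓐 V)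

/-- The bracket of symbols: the pair `(p, Λ)` stands for the symbol `p_Λ`, and
`[p_Λ, q_Γ] = [p_Λ q]_{Λ+Γ}`. -/
def bracket (x y : 𝓐 × S) : 𝓐 × S := (Y.br x.2 x.1 y.1, x.2 + y.2)

/-- The Lie derivative along the symbol `x` of a function of `k` symbols. -/
def lieD {k : ℕ} (x : 𝓐 × S) : ((Fin k → 𝓐 × S) → V) →ₗ[S] ((Fin k → 𝓐 × S) → V) :=
  (Y.act x.2 x.1).compLeft _
    - ∑ j, LinearMap.funLeft S V fun y => Function.update y j (Y.bracket x (y j))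

/-- The Chevalley–Eilenberg differential, defined by recursion through Cartan's formula
`ι_x d = L_x - d ι_x`. -/
def d : ∀ {k : ℕ}, ((Fin k → 𝓐 × S) → V) →ₗ[S] ((Fin (k + 1) → 𝓐 × S) → V)
  | 0 => LinearMap.pi fun x => LinearMap.proj (Fin.tail x) ∘ₗ Y.lieD (x 0)
  | _ + 1 => LinearMap.pi fun x =>
      LinearMap.proj (Fin.tail x) ∘ₗ (Y.lieD (x 0) - d ∘ₗ contract S V (x 0))

/-- The `k`-cochains: functions of `k` symbols which are linear and compatible with `D` in every
argument. Skew-symmetry is treated separately. -/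
def cochains (k : ℕ) : Submodule S ((Fin k → 𝓐 × S) → V) :=
  ⨅ (y : Fin k → 𝓐 × S) (j : Fin k) (Λ : S),
    (slot Y.D Λ V).comap (LinearMap.funLeft S V fun p => Function.update y j (p, Λ))

variable {Y}

theorem lieD_apply {k : ℕ} (x : 𝓐 × S) (E : (Fin k → 𝓐 × S) → V) (y : Fin k → 𝓐 × S) :
    Y.lieD x E y
      = Y.act x.2 x.1 (E y) - ∑ j, E (Function.update y j (Y.bracket x (y j))) := by
  simp [lieD, LinearMap.funLeft_apply]

theorem contract_d_zero (x : 𝓐 × S) (E : (Fin 0 → 𝓐 × S) → V) :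
    contract S V x (Y.d E) = Y.lieD x E := by
  funext y
  simp [contract_apply, d]

theorem contract_d {k : ℕ} (x : 𝓐 × S) (E : (Fin (k + 1) → 𝓐 × S) → V) :
    contract S V x (Y.d E) = Y.lieD x E - Y.d (contract S V x E) := by
  funext y
  simp [contract_apply, d]

theorem contract_lieD {k : ℕ} (x y : 𝓐 × S) (E : (Fin (k + 1) → 𝓐 × S) → V) :
    contract S V y (Y.lieD x E)
      = Y.lieD x (contract S V y E) - contract S V (Y.bracket x y) E := by
  funext z
  simp only [contract_apply, lieD_apply, Pi.sub_apply, Fin.sum_univ_succ, Fin.cons_zero,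
    Fin.cons_succ, Fin.update_cons_zero, Fin.cons_update]
  abel

theorem mem_cochains {k : ℕ} {E : (Fin k → 𝓐 × S) → V} :
    E ∈ Y.cochains k ↔ ∀ y j Λ, (fun p => E (Function.update y j (p, Λ))) ∈ slot Y.D Λ V := by
  simp only [cochains, Submodule.mem_iInf, Submodule.mem_comap]
  rfl

variable {k : ℕ}

theorem contract_mem_cochains {E : (Fin (k + 1) → 𝓐 × S) → V} (hE : E ∈ Y.cochains (k + 1))
    (x : 𝓐 × S) : contract S V x E ∈ Y.cochains k := by
  rw [mem_cochains] at hE ⊢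
  intro y j Λ
  simpa only [contract_apply, Fin.cons_update] using hE (Fin.cons x y) j.succ Λ

theorem contract_slot {E : (Fin (k + 1) → 𝓐 × S) → V} (hE : E ∈ Y.cochains (k + 1)) (Λ : S) :
    (fun p => contract S V (p, Λ) E) ∈ slot Y.D Λ ((Fin k → 𝓐 × S) → V) :=
  pi_mem_slot fun y => by
    simpa only [contract_apply, Fin.update_cons_zero] using
      mem_cochains.1 hE (Fin.cons (0, 0) y) 0 Λ

theorem lieD_mem_cochains {E : (Fin k → 𝓐 × S) → V} (hE : E ∈ Y.cochains k) (x : 𝓐 × S) :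
    Y.lieD x E ∈ Y.cochains k := by
  rw [mem_cochains] at hE ⊢
  intro y j Λ
  simp only [lieD_apply]
  refine sub_mem (comp_mem_slot (hE y j Λ) _) ?_
  rw [← Finset.sum_fn]
  refine sum_mem fun i _ => ?_
  obtain rfl | hij := eq_or_ne i j
  · obtain ⟨φ, hφ, hφE⟩ := hE y i (x.2 + Λ)
    simp only [bracket, Function.update_idem, Function.update_self, ← congrFun hφE]
    exact coe_mem_slot (φ ∘ₗ Y.br x.2 x.1) fun p => by
      rw [LinearMap.comp_apply, Y.br_D_right]
      exact LinearMap.congr_fun hφ (Y.br x.2 x.1 p)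
  · simpa [Function.update_of_ne hij, Function.update_comm hij] using
      hE (Function.update y i (Y.bracket x (y i))) j Λ

theorem lieD_slot {E : (Fin k → 𝓐 × S) → V} (hE : E ∈ Y.cochains k) (Λ : S) :
    (fun p => Y.lieD (p, Λ) E) ∈ slot Y.D Λ ((Fin k → 𝓐 × S) → V) := by
  refine pi_mem_slot fun y => ?_
  simp only [lieD_apply]
  refine sub_mem (coe_mem_slot ((Y.act Λ).flip (E y)) fun p => Y.act_D Λ p _) ?_
  rw [← Finset.sum_fn]
  refine sum_mem fun i _ => ?_
  obtain ⟨φ, -, hφE⟩ := mem_cochains.1 hE y i (Λ + (y i).2)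
  simp only [bracket, ← congrFun hφE]
  exact coe_mem_slot (φ ∘ₗ (Y.br Λ).flip (y i).1) fun p => by
    rw [LinearMap.comp_apply, LinearMap.flip_apply, Y.br_D_left, map_zero]

theorem mem_cochains_succ {E : (Fin (k + 1) → 𝓐 × S) → V} :
    E ∈ Y.cochains (k + 1) ↔
      (∀ Λ, (fun p => contract S V (p, Λ) E) ∈ slot Y.D Λ ((Fin k → 𝓐 × S) → V)) ∧
        ∀ x, contract S V x E ∈ Y.cochains k := by
  refine ⟨fun hE => ⟨contract_slot hE, contract_mem_cochains hE⟩, fun ⟨h0, hsucc⟩ => ?_⟩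
  refine mem_cochains.2 fun y j Λ => ?_
  induction y using Fin.consCases with | _ x y => ?_
  induction j using Fin.cases with
  | zero =>
    simp only [Fin.update_cons_zero]
    exact comp_mem_slot (h0 Λ) (LinearMap.proj (φ := fun _ => V) y)
  | succ j =>
    simpa only [contract_apply, Fin.cons_update] using mem_cochains.1 (hsucc x) y j Λ

theorem d_mem_cochains {E : (Fin k → 𝓐 × S) → V} (hE : E ∈ Y.cochains k) :
    Y.d E ∈ Y.cochains (k + 1) := by
  induction k with
  | zero =>
    refine mem_cochains_succ.2 ⟨fun Λ => ?_, fun x => ?_⟩ <;> simp only [contract_d_zero]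
    exacts [lieD_slot hE Λ, lieD_mem_cochains hE x]
  | succ k ih =>
    refine mem_cochains_succ.2 ⟨fun Λ => ?_, fun x => ?_⟩ <;> simp only [contract_d]
    · exact sub_mem (lieD_slot hE Λ) (comp_mem_slot (contract_slot hE Λ) Y.d)
    · exact sub_mem (lieD_mem_cochains hE x) (ih (contract_mem_cochains hE x))

theorem contract_bracket_bracket {E : (Fin (k + 1) → 𝓐 × S) → V}
    (hE : E ∈ Y.cochains (k + 1)) (x y z : 𝓐 × S) :
    contract S V (Y.bracket x (Y.bracket y z)) E - contract S V (Y.bracket y (Y.bracket x z)) E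
      = contract S V (Y.bracket (Y.bracket x y) z) E := by
  obtain ⟨φ, -, hφE⟩ := contract_slot hE (x.2 + y.2 + z.2)
  replace hφE : ∀ p, contract S V (p, x.2 + y.2 + z.2) E = φ p := fun p => (congrFun hφE p).symm
  simp only [bracket, ← add_assoc]
  rw [add_comm y.2 x.2, hφE, hφE, hφE, ← map_sub, Y.br_jacobi]

theorem contract_bracket_comm {E : (Fin (k + 1) → 𝓐 × S) → V} (hE : E ∈ Y.cochains (k + 1))
    (x y : 𝓐 × S) : contract S V (Y.bracket x y) E = -contract S V (Y.bracket y x) E := by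
  obtain ⟨φ, hφ, hφE⟩ := contract_slot hE (x.2 + y.2)
  replace hφE : ∀ p, contract S V (p, x.2 + y.2) E = φ p := fun p => (congrFun hφE p).symm
  obtain ⟨u, hu⟩ := Y.br_skew x.2 y.2 x.1 y.1
  simp only [bracket]
  rw [add_comm y.2 x.2, hφE, hφE, eq_neg_iff_add_eq_zero, ← map_add, ← hu]
  exact LinearMap.congr_fun hφ u

theorem lieD_bracket {E : (Fin k → 𝓐 × S) → V} (hE : E ∈ Y.cochains k) (x y : 𝓐 × S) :
    Y.lieD (Y.bracket x y) E = Y.lieD x (Y.lieD y E) - Y.lieD y (Y.lieD x E) := by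
  induction k with
  | zero =>
    funext z
    simp [lieD_apply, bracket, Y.act_jacobi]
  | succ k ih =>
    refine ext_contract (S := S) fun w => ?_
    simp only [map_sub, contract_lieD, ih (contract_mem_cochains hE w),
      ← contract_bracket_bracket hE x y w]
    abel

theorem lieD_d {E : (Fin k → 𝓐 × S) → V} (hE : E ∈ Y.cochains k) (x : 𝓐 × S) :
    Y.lieD x (Y.d E) = Y.d (Y.lieD x E) := by
  induction k with
  | zero =>
    refine ext_contract (S := S) fun w => ?_
    simp only [contract_lieD, contract_d_zero, lieD_bracket hE]
    abel
  | succ k ih =>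
    refine ext_contract (S := S) fun w => ?_
    simp only [contract_lieD, contract_d, map_sub, lieD_bracket hE,
      ih (contract_mem_cochains hE w)]
    abel

theorem d_d {E : (Fin k → 𝓐 × S) → V} (hE : E ∈ Y.cochains k) : Y.d (Y.d E) = 0 := by
  induction k with
  | zero =>
    refine ext_contract (S := S) fun w => ?_
    rw [contract_d, contract_d_zero, lieD_d hE, sub_self, map_zero]
  | succ k ih =>
    refine ext_contract (S := S) fun w => ?_
    rw [contract_d, contract_d, map_sub, ih (contract_mem_cochains hE w), sub_zero, lieD_d hE,
      sub_self, map_zero]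

theorem _root_.LCC.IsSkew.lieD {E : (Fin k → 𝓐 × S) → V} (h : IsSkew E) (x : 𝓐 × S) :
    IsSkew (Y.lieD x E) := by
  intro y σ
  rw [lieD_apply, lieD_apply, h, smul_sub, map_zsmul, Finset.smul_sum]
  congr 1
  refine Fintype.sum_equiv σ _ _ fun j => ?_
  rw [← h]
  congr 1
  funext i
  simp [Function.update_apply, EmbeddingLike.apply_eq_iff_eq]

theorem _root_.LCC.IsSkew.d {E : (Fin k → 𝓐 × S) → V} (h : IsSkew E) (hE : E ∈ Y.cochains k) :
    IsSkew (Y.d E) := by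
  induction k with
  | zero =>
    have : Subsingleton (Fin (0 + 1)) := inferInstanceAs (Subsingleton (Fin 1))
    exact .of_subsingleton _
  | succ k ih =>
    refine IsSkew.of_contract (S := S) (fun x y => ?_) fun x => ?_
    · rw [contract_d, contract_d, map_sub, map_sub, contract_lieD, contract_lieD,
        contract_bracket_comm hE y x]
      cases k with
      | zero =>
        rw [contract_d_zero, contract_d_zero]
        abel
      | succ k =>
        rw [contract_d, contract_d, h.contract_contract x y, map_neg]
        abel
    · rw [contract_d]
      exact (h.lieD x).sub (ih (h.contract x) (contract_mem_cochains hE x))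

theorem d_apply (E : (Fin k → 𝓐 × S) → V) (x : Fin (k + 1) → 𝓐 × S) :
    Y.d E x = ∑ i : Fin (k + 1), (-1 : ℤ) ^ (i : ℕ) •
      (Y.act (x i).2 (x i).1 (E (i.removeNth x)) - ∑ j : Fin k, if i ≤ j.castSucc then
        E (Function.update (i.removeNth x) j (Y.bracket (x i) (x j.succ))) else 0) := by
  induction k with
  | zero => simp [d, lieD_apply, Fin.removeNth_zero]
  | succ k ih =>
    induction x using Fin.consCases with | _ x₀ x => ?_
    have hd : Y.d E (Fin.cons x₀ x) = Y.lieD x₀ E x - Y.d (contract S V x₀ E) x :=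
      congrFun (contract_d x₀ E) x
    rw [Fin.sum_univ_succ, hd, ih, lieD_apply, sub_eq_add_neg _ (∑ i, _),
      ← Finset.sum_neg_distrib]
    refine congrArg₂ _ (by simp) (Finset.sum_congr rfl fun i _ => ?_)
    have hi : i.succ.removeNth (α := fun _ => 𝓐 × S) (Fin.cons x₀ x)
        = Fin.cons x₀ (i.removeNth x) := Fin.cons_comp_succ_succAbove x₀ x i
    rw [Fin.sum_univ_succ, hi]
    simp [pow_succ, contract_apply, Fin.cons_update, Fin.le_def]

theorem _root_.LCC.IsSkew.d_apply {E : (Fin (k + 1) → 𝓐 × S) → V} (h : IsSkew E)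
    (x : Fin (k + 2) → 𝓐 × S) :
    Y.d E x = ∑ i : Fin (k + 2), (-1 : ℤ) ^ (i : ℕ) • Y.act (x i).2 (x i).1 (E (i.removeNth x))
      + ∑ i : Fin (k + 2), ∑ j : Fin (k + 1), if i ≤ j.castSucc then
          (-1 : ℤ) ^ (k + i + j + 1 : ℕ) •
            E (Fin.snoc (j.removeNth (i.removeNth x)) (Y.bracket (x i) (x j.succ))) else 0 := by
  rw [SymbolSystem.d_apply, ← Finset.sum_add_distrib]
  refine Finset.sum_congr rfl fun i _ => ?_
  rw [smul_sub, sub_eq_add_neg, ← smul_neg, ← Finset.sum_neg_distrib, Finset.smul_sum]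
  refine congrArg _ (Finset.sum_congr rfl fun j _ => ?_)
  split_ifs
  · rw [← Fin.insertNth_removeNth, h.insertNth_eq_snoc, ← neg_smul, smul_smul]
    congr 1
    ring
  · simp

end SymbolSystem

/-! ### Polynomials with coefficients in a module -/

section ScalarExtension

variable {F : Type*} [CommRing F] {S S' : Type*} [CommRing S] [Algebra F S] [CommRing S']
  [Algebra F S'] {N : Type*} [AddCommGroup N] [Module F N]

theorem baseChange_induction {P : S ⊗[F] N → Prop} (one_tmul : ∀ v : N, P (1 ⊗ₜ[F] v))
    (add : ∀ x y, P x → P y → P (x + y)) (smul : ∀ (s : S) (x : S ⊗[F] N), P x → P (s • x))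
    (x : S ⊗[F] N) : P x := by
  induction x using TensorProduct.induction_on with
  | zero => simpa using one_tmul 0
  | tmul s v => exact TensorProduct.tmul_eq_smul_one_tmul (R := F) s v ▸ smul s _ (one_tmul v)
  | add x y hx hy => exact add _ _ hx hy

variable (N) in
/-- The change of scalars `S ⊗ N → S' ⊗ N` along a homomorphism `S → S'`. If `S` is a polynomial
ring, this is the evaluation of polynomials with coefficients in `N`. -/
noncomputable def changeScalars (f : S →ₐ[F] S') : S ⊗[F] N →ₗ[F] S' ⊗[F] N :=
  f.toLinearMap.rTensor N

theorem changeScalars_tmul (f : S →ₐ[F] S') (s : S) (v : N) :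
    changeScalars N f (s ⊗ₜ v) = f s ⊗ₜ v := rfl

theorem changeScalars_smul (f : S →ₐ[F] S') (s : S) (x : S ⊗[F] N) :
    changeScalars N f (s • x) = f s • changeScalars N f x := by
  induction x using TensorProduct.induction_on with
  | zero => simp
  | tmul t v => simp [changeScalars_tmul, TensorProduct.smul_tmul']
  | add x y hx hy => simp only [smul_add, map_add, hx, hy]

theorem changeScalars_changeScalars {S'' : Type*} [CommRing S''] [Algebra F S'']
    (g : S' →ₐ[F] S'') (f : S →ₐ[F] S') (x : S ⊗[F] N) :
    changeScalars N g (changeScalars N f x) = changeScalars N (g.comp f) x := by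
  simp only [changeScalars, AlgHom.comp_toLinearMap, LinearMap.rTensor_comp,
    LinearMap.comp_apply]

theorem changeScalars_baseChange (f : S →ₐ[F] S') (D : N →ₗ[F] N) (x : S ⊗[F] N) :
    changeScalars N f (D.baseChange S x) = D.baseChange S' (changeScalars N f x) := by
  induction x using TensorProduct.induction_on with
  | zero => simp
  | tmul t v => simp [changeScalars_tmul]
  | add x y hx hy => simp only [map_add, hx, hy]

/-- The operator `-∂ - Λ` on `S ⊗ N`. -/
noncomputable def negShift (D : N →ₗ[F] N) (Λ : S) : Module.End S (S ⊗[F] N) :=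
  -(D.baseChange S + Λ • LinearMap.id)

theorem negShift_apply (D : N →ₗ[F] N) (Λ : S) (x : S ⊗[F] N) :
    negShift D Λ x = -(D.baseChange S x + Λ • x) := rfl

theorem changeScalars_negShift_pow (f : S →ₐ[F] S') (D : N →ₗ[F] N) (Λ : S) (n : ℕ)
    (x : S ⊗[F] N) :
    changeScalars N f ((negShift D Λ ^ n) x) = (negShift D (f Λ) ^ n) (changeScalars N f x) := by
  induction n generalizing x with
  | zero => rfl
  | succ n ih =>
    simp only [pow_succ, Module.End.mul_apply, ih, negShift_apply, map_neg, map_add,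
      changeScalars_baseChange, changeScalars_smul]

theorem negShift_pow_tmul (D : N →ₗ[F] N) (Λ s : S) (n : ℕ) (v : N) :
    (negShift D Λ ^ n) (s ⊗ₜ v) = ∑ p ∈ Finset.HasAntidiagonal.antidiagonal n,
      (Λ ^ p.1 * s) ⊗ₜ[F] (((-1 : F) ^ n * (n.choose p.1 : F)) • (D ^ p.2) v) := by
  have hcomm : Commute (Λ • (1 : Module.End S (S ⊗[F] N))) (D.baseChange S) :=
    (Commute.one_left (D.baseChange S : Module.End S (S ⊗[F] N))).smul_left Λ
  have hneg : negShift D Λ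
      = (-1 : F) • (Λ • (1 : Module.End S (S ⊗[F] N)) + D.baseChange S) := by
    ext v
    simp [negShift_apply, add_comm]
  rw [hneg, smul_pow, hcomm.add_pow', LinearMap.smul_apply, LinearMap.sum_apply,
    Finset.smul_sum]
  refine Finset.sum_congr rfl fun p _ => ?_
  rw [smul_pow, one_pow, ← LinearMap.baseChange_pow, mul_smul, TensorProduct.tmul_smul,
    TensorProduct.tmul_smul, LinearMap.smul_apply]
  simp [TensorProduct.smul_tmul', Nat.cast_smul_eq_nsmul]

theorem negShift_pow_sub_mem_range (D : N →ₗ[F] N) (Λ Γ : S) (n : ℕ) (x : S ⊗[F] N) :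
    (negShift D Λ ^ n) x - Γ ^ n • x
      ∈ LinearMap.range (D.baseChange S + (Λ + Γ) • LinearMap.id) := by
  induction n with
  | zero => simp
  | succ n ih =>
    set y := (negShift D Λ ^ n) x
    have hsplit : (negShift D Λ ^ (n + 1)) x - Γ ^ (n + 1) • x
        = (negShift D Λ y - Γ • y) + Γ • (y - Γ ^ n • x) := by
      rw [pow_succ', Module.End.mul_apply, pow_succ' Γ, mul_smul, smul_sub]
      abel
    rw [hsplit]
    refine add_mem ⟨-y, ?_⟩ (Submodule.smul_mem _ _ ih)
    simp only [negShift_apply, LinearMap.add_apply, LinearMap.smul_apply, LinearMap.id_apply,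
      map_neg, add_smul]
    abel

end ScalarExtension

section LambdaPoly

variable {F : Type*} [CommRing F] {N : Type*} [AddCommGroup N] [Module F N]

variable (F) in
/-- The space `F[λ₁,…,λ_K] ⊗ N` of polynomials with coefficients in `N`. -/
abbrev LambdaPoly (K : ℕ) (N : Type*) [AddCommGroup N] [Module F N] : Type _ :=
  MvPolynomial (Fin K) F ⊗[F] N

variable {K : ℕ}

/-- The family of all coefficients of a polynomial. The monomials are indexed by functions. -/
noncomputable def lambdaCoeffEquiv : LambdaPoly F K N ≃ₗ[F] ((Fin K → ℕ) →₀ N) :=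
  TensorProduct.equivFinsuppOfBasisLeft (MvPolynomial.basisMonomials (Fin K) F) ≪≫ₗ
    Finsupp.domLCongr Finsupp.equivFunOnFinite

/-- The coefficient of `λ^ν`. -/
noncomputable def lambdaCoeff (ν : Fin K → ℕ) : LambdaPoly F K N →ₗ[F] N :=
  Finsupp.lapply ν ∘ₗ lambdaCoeffEquiv.toLinearMap

theorem lambdaCoeff_tmul (ν : Fin K → ℕ) (p : MvPolynomial (Fin K) F) (v : N) :
    lambdaCoeff ν (p ⊗ₜ[F] v) = p.coeff (Finsupp.equivFunOnFinite.symm ν) • v := by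
  simp [lambdaCoeff, lambdaCoeffEquiv, Finsupp.domLCongr_apply, Finsupp.domCongr,
    MvPolynomial.basisMonomials]
  rfl

theorem LambdaPoly.ext {φ ψ : LambdaPoly F K N} (h : ∀ ν, lambdaCoeff ν φ = lambdaCoeff ν ψ) :
    φ = ψ :=
  lambdaCoeffEquiv.injective (Finsupp.ext h)

theorem lambdaCoeff_finite_support (φ : LambdaPoly F K N) :
    (Function.support fun ν => lambdaCoeff ν φ).Finite :=
  (lambdaCoeffEquiv φ).hasFiniteSupport

theorem LambdaPoly.induction_monomial {P : LambdaPoly F K N → Prop}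
    (monomial : ∀ (μ : Fin K → ℕ) v, P ((∏ i, MvPolynomial.X i ^ μ i) ⊗ₜ[F] v))
    (add : ∀ φ ψ, P φ → P ψ → P (φ + ψ)) (φ : LambdaPoly F K N) : P φ := by
  have zero : P 0 := by simpa using monomial 0 0
  induction φ using TensorProduct.induction_on with
  | zero => exact zero
  | add φ ψ hφ hψ => exact add _ _ hφ hψ
  | tmul p v =>
    induction p using MvPolynomial.induction_on' with
    | monomial μ r =>
      rw [← mul_one r, ← smul_eq_mul, ← MvPolynomial.smul_monomial, TensorProduct.smul_tmul,
        MvPolynomial.monomial_eq, Finsupp.prod_fintype _ _ (by simp)]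
      simpa using monomial μ (r • v)
    | add p q hp hq => exact TensorProduct.add_tmul (R := F) p q v ▸ add _ _ hp hq

theorem lambdaCoeff_X_pow_smul (i : Fin K) (p : ℕ) (ν : Fin K → ℕ) (φ : LambdaPoly F K N) :
    lambdaCoeff ν ((MvPolynomial.X i ^ p : MvPolynomial (Fin K) F) • φ)
      = if p ≤ ν i then lambdaCoeff (Function.update ν i (ν i - p)) φ else 0 := by
  induction φ using TensorProduct.induction_on with
  | zero => simp
  | add φ ψ hφ hψ => rw [smul_add, map_add, hφ, hψ]; split_ifs <;> simp
  | tmul q v =>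
    rw [TensorProduct.smul_tmul', smul_eq_mul, lambdaCoeff_tmul, lambdaCoeff_tmul,
      MvPolynomial.X_pow_eq_monomial, MvPolynomial.coeff_monomial_mul', one_mul, ite_smul,
      zero_smul]
    have hν : Finsupp.equivFunOnFinite.symm ν - Finsupp.single i p
        = Finsupp.equivFunOnFinite.symm (Function.update ν i (ν i - p)) := by
      ext j
      rcases eq_or_ne j i with rfl | h
      · simp
      · simp [h]
    simp [Finsupp.single_le_iff, hν]

theorem lambdaCoeff_X_smul (i : Fin K) (ν : Fin K → ℕ) (φ : LambdaPoly F K N) :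
    lambdaCoeff ν ((MvPolynomial.X i : MvPolynomial (Fin K) F) • φ)
      = if ν i = 0 then 0 else lambdaCoeff (Function.update ν i (ν i - 1)) φ := by
  have h := lambdaCoeff_X_pow_smul i 1 ν φ
  rw [pow_one] at h
  rw [h, ← ite_not]
  simp [Nat.one_le_iff_ne_zero]

theorem lambdaCoeff_baseChange (D : N →ₗ[F] N) (ν : Fin K → ℕ) (φ : LambdaPoly F K N) :
    lambdaCoeff ν (D.baseChange _ φ) = D (lambdaCoeff ν φ) := by
  induction φ using TensorProduct.induction_on with
  | zero => simp
  | add φ ψ hφ hψ => simp only [map_add, hφ, hψ]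
  | tmul p v => simp [lambdaCoeff_tmul]

/-- The renaming of variables, possibly introducing new ones. -/
noncomputable abbrev LambdaPoly.rename {K' : ℕ} (e : Fin K → Fin K') :
    LambdaPoly F K N →ₗ[F] LambdaPoly F K' N :=
  changeScalars N (MvPolynomial.rename e)

theorem lambdaCoeff_rename {K' : ℕ} {e : Fin K → Fin K'} (he : Function.Injective e)
    (ν : Fin K' → ℕ) (φ : LambdaPoly F K N) [Decidable (∀ j ∉ Set.range e, ν j = 0)] :
    lambdaCoeff ν (LambdaPoly.rename e φ)
      = if ∀ j ∉ Set.range e, ν j = 0 then lambdaCoeff (ν ∘ e) φ else 0 := by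
  induction φ using TensorProduct.induction_on with
  | zero => simp
  | add φ ψ hφ hψ => rw [map_add, map_add, hφ, hψ, map_add]; split_ifs <;> simp
  | tmul p v =>
    rw [changeScalars_tmul, lambdaCoeff_tmul, lambdaCoeff_tmul]
    split_ifs with hν
    · have : Finsupp.equivFunOnFinite.symm ν
          = (Finsupp.equivFunOnFinite.symm (ν ∘ e)).mapDomain e := by
        ext j
        by_cases hj : j ∈ Set.range e
        · obtain ⟨i, rfl⟩ := hj
          simp [Finsupp.mapDomain_apply he]
        · simp [Finsupp.mapDomain_of_notMem_range _ _ hj, hν j hj]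
      rw [this, MvPolynomial.coeff_rename_mapDomain e he]
    · push Not at hν
      obtain ⟨j, hj, hνj⟩ := hν
      rw [MvPolynomial.coeff_rename_eq_zero, zero_smul]
      rintro u hu
      refine absurd ?_ hνj
      simpa [Finsupp.mapDomain_of_notMem_range _ _ hj] using (DFunLike.congr_fun hu j).symm

theorem lambdaCoeff_rename_succAbove (i : Fin (K + 1)) (ν : Fin (K + 1) → ℕ)
    (φ : LambdaPoly F K N) :
    lambdaCoeff ν (LambdaPoly.rename i.succAbove φ)
      = if ν i = 0 then lambdaCoeff (i.removeNth ν) φ else 0 := by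
  classical
  rw [lambdaCoeff_rename Fin.succAbove_right_injective]
  simp [Fin.range_succAbove]
  rfl

end LambdaPoly

section LambdaAction

variable {F : Type*} [Field F] {A M : Type*} [AddCommGroup A] [Module F A] [AddCommGroup M]
  [Module F M] {L : LCA F A}

/-- The adjoint module. -/
def LCA.adjoint (L : LCA F A) : LCAMod F L A where
  D := L.D
  act := L.br
  act_fin := L.br_fin
  sesq_left_zero := L.sesq_left_zero
  sesq_left := L.sesq_left
  sesq_right := L.sesq_right
  jacobi := L.jacobi

theorem finsuppSum_ite_le {N P : Type*} [AddCommMonoid N] [AddCommMonoid P] (f : ℕ →₀ N) (m : ℕ)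
    {g : ℕ → N → P} (hg : ∀ p, g p 0 = 0) :
    (f.sum fun p c => if p ≤ m then g p c else 0) = ∑ p ∈ Finset.range (m + 1), g p (f p) := by
  rw [Finsupp.sum, ← Finset.sum_filter]
  refine Finset.sum_subset (fun p => by simp) fun p hp hp' => ?_
  rw [Finset.mem_filter, Finsupp.mem_support_iff, not_and'] at hp'
  rw [not_not.mp (hp' (Finset.mem_range_succ_iff.mp hp)), hg]

/-- The family of coefficients of `a_λ v`. -/
noncomputable def actFinsupp (R : LCAMod F L M) : A →ₗ[F] M →ₗ[F] (ℕ →₀ M) :=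
  LinearMap.mk₂ F (fun a v => .ofSupportFinite (R.act a v) (R.act_fin a v))
    (fun a b v => by ext; simp [Finsupp.ofSupportFinite_coe])
    (fun r a v => by ext; simp [Finsupp.ofSupportFinite_coe])
    (fun a v w => by ext; simp [Finsupp.ofSupportFinite_coe])
    (fun r a v => by ext; simp [Finsupp.ofSupportFinite_coe])

theorem actFinsupp_apply (R : LCAMod F L M) (a : A) (v : M) (n : ℕ) :
    actFinsupp R a v n = R.act a v n := rfl

section

variable {S S' : Type*} [CommRing S] [Algebra F S] [CommRing S'] [Algebra F S']

/-- The `λ`-action with `λ` evaluated at `Λ : S`, extended `S`-bilinearly. -/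
noncomputable def lambdaAct (R : LCAMod F L M) (Λ : S) :
    S ⊗[F] A →ₗ[S] S ⊗[F] M →ₗ[S] S ⊗[F] M :=
  LinearMap.liftBaseChange S <|
    ((LinearMap.liftBaseChangeEquiv S).restrictScalars F).toLinearMap ∘ₗ
      (actFinsupp R).compr₂ (Finsupp.lsum F fun n => TensorProduct.mk F S M (Λ ^ n))

theorem lambdaAct_one_tmul (R : LCAMod F L M) (Λ : S) (a : A) (v : M) :
    lambdaAct R Λ (1 ⊗ₜ a) (1 ⊗ₜ v) = (actFinsupp R a v).sum fun n w => (Λ ^ n) ⊗ₜ[F] w := by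
  simp [lambdaAct, Finsupp.lsum_apply]
  rfl

theorem changeScalars_lambdaAct (f : S →ₐ[F] S') (R : LCAMod F L M) (Λ : S) (x : S ⊗[F] A)
    (y : S ⊗[F] M) :
    changeScalars M f (lambdaAct R Λ x y)
      = lambdaAct R (f Λ) (changeScalars A f x) (changeScalars M f y) := by
  induction x using baseChange_induction with
  | add x x' hx hx' => simp only [map_add, LinearMap.add_apply, hx, hx']
  | smul s x hx => simp only [map_smul, LinearMap.smul_apply, changeScalars_smul, hx]
  | one_tmul a =>
    induction y using baseChange_induction with
    | add y y' hy hy' => simp only [map_add, hy, hy']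
    | smul s y hy => simp only [map_smul, changeScalars_smul, hy]
    | one_tmul v => simp [changeScalars_tmul, lambdaAct_one_tmul, map_finsuppSum]

end

theorem lambdaCoeff_lambdaAct (R : LCAMod F L M) {K : ℕ} (i : Fin (K + 1)) (a : A)
    (φ : LambdaPoly F K M) (ν : Fin (K + 1) → ℕ) :
    lambdaCoeff ν (lambdaAct R (X i) (1 ⊗ₜ a) (LambdaPoly.rename i.succAbove φ))
      = R.act a (lambdaCoeff (i.removeNth ν) φ) (ν i) := by
  induction φ using TensorProduct.induction_on with
  | zero => simp
  | add φ ψ hφ hψ => simp only [map_add, Pi.add_apply, hφ, hψ]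
  | tmul p v =>
    have hexpand : lambdaAct R (X i) (1 ⊗ₜ a) (LambdaPoly.rename i.succAbove (p ⊗ₜ v))
        = (actFinsupp R a v).sum fun n w =>
          (X i ^ n : MvPolynomial (Fin (K + 1)) F) • LambdaPoly.rename i.succAbove (p ⊗ₜ w) := by
      rw [changeScalars_tmul, TensorProduct.tmul_eq_smul_one_tmul _ v, map_smul, lambdaAct_one_tmul,
        Finsupp.smul_sum]
      simp only [changeScalars_tmul, TensorProduct.smul_tmul', smul_eq_mul, mul_comm]
    have hterm (n : ℕ) (w : M) : lambdaCoeff ν ((X i ^ n : MvPolynomial (Fin (K + 1)) F) •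
          LambdaPoly.rename i.succAbove (p ⊗ₜ[F] w))
        = if n = ν i then lambdaCoeff (i.removeNth ν) (p ⊗ₜ[F] w) else 0 := by
      rw [lambdaCoeff_X_pow_smul, lambdaCoeff_rename_succAbove, Function.update_self,
        Fin.removeNth_update, ← ite_and]
      exact if_congr (by lia) rfl rfl
    rw [hexpand, map_finsuppSum]
    simp only [hterm, lambdaCoeff_tmul]
    rw [Finsupp.sum_ite_eq', map_smul]
    simp +contextual [actFinsupp_apply]

theorem lambdaCoeff_lambdaAct_one_tmul (R : LCAMod F L M) (a : A) (v : M) (ν : Fin 1 → ℕ) :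
    lambdaCoeff ν (lambdaAct R (X 0) (1 ⊗ₜ a) (1 ⊗ₜ v)) = R.act a v (ν 0) := by
  simpa [changeScalars_tmul, lambdaCoeff_tmul, Subsingleton.elim _ (0 : Fin 0 →₀ ℕ)] using
    lambdaCoeff_lambdaAct R (0 : Fin 1) a (1 ⊗ₜ v) ν

section

variable {S : Type*} [CommRing S] [Algebra F S]

theorem lambdaAct_D_left (R : LCAMod F L M) (Λ : S) (x : S ⊗[F] A) (y : S ⊗[F] M) :
    lambdaAct R Λ (L.D.baseChange S x) y = -(Λ • lambdaAct R Λ x y) := by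
  induction x using baseChange_induction with
  | add x x' hx hx' => simp only [map_add, LinearMap.add_apply, hx, hx', smul_add, neg_add]
  | smul s x hx => simp only [map_smul, LinearMap.smul_apply, hx, smul_neg, smul_comm s Λ]
  | one_tmul a =>
    induction y using baseChange_induction with
    | add y y' hy hy' => simp only [map_add, hy, hy', smul_add, neg_add]
    | smul s y hy => simp only [map_smul, hy, smul_neg, smul_comm s Λ]
    | one_tmul v =>
      have universal : lambdaAct R (X 0 : MvPolynomial (Fin 1) F) (1 ⊗ₜ L.D a) (1 ⊗ₜ v)
          = -((X 0 : MvPolynomial (Fin 1) F) • lambdaAct R (X 0) (1 ⊗ₜ a) (1 ⊗ₜ v)) := by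
        refine LambdaPoly.ext fun ν => ?_
        rw [map_neg, lambdaCoeff_X_smul, lambdaCoeff_lambdaAct_one_tmul,
          lambdaCoeff_lambdaAct_one_tmul, Function.update_self]
        rcases ν 0 with _ | n
        · simp [R.sesq_left_zero]
        · simp [R.sesq_left]
      simpa [changeScalars_lambdaAct, changeScalars_smul, changeScalars_tmul] using
        congr(changeScalars M (aeval fun _ => Λ) $universal)

theorem lambdaAct_D_right (R : LCAMod F L M) (Λ : S) (x : S ⊗[F] A) (y : S ⊗[F] M) :
    lambdaAct R Λ x (R.D.baseChange S y)
      = R.D.baseChange S (lambdaAct R Λ x y) + Λ • lambdaAct R Λ x y := by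
  induction x using baseChange_induction with
  | add x x' hx hx' => simp only [map_add, LinearMap.add_apply, hx, hx', smul_add]; abel
  | smul s x hx => simp only [map_smul, LinearMap.smul_apply, hx, smul_add, smul_comm s Λ]
  | one_tmul a =>
    induction y using baseChange_induction with
    | add y y' hy hy' => simp only [map_add, hy, hy', smul_add]; abel
    | smul s y hy => simp only [map_smul, hy, smul_add, smul_comm s Λ]
    | one_tmul v =>
      have universal : lambdaAct R (X 0 : MvPolynomial (Fin 1) F) (1 ⊗ₜ a) (1 ⊗ₜ R.D v)
          = R.D.baseChange (MvPolynomial (Fin 1) F) (lambdaAct R (X 0) (1 ⊗ₜ a) (1 ⊗ₜ v))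
            + (X 0 : MvPolynomial (Fin 1) F) • lambdaAct R (X 0) (1 ⊗ₜ a) (1 ⊗ₜ v) := by
        refine LambdaPoly.ext fun ν => ?_
        rw [map_add, lambdaCoeff_X_smul, lambdaCoeff_baseChange, lambdaCoeff_lambdaAct_one_tmul,
          lambdaCoeff_lambdaAct_one_tmul, lambdaCoeff_lambdaAct_one_tmul, R.sesq_right,
          Function.update_self]
      simpa [changeScalars_lambdaAct, changeScalars_smul, changeScalars_tmul,
        changeScalars_baseChange] using congr(changeScalars M (aeval fun _ => Λ) $universal)

end

theorem lambdaCoeff_lambdaAct_lambdaAct (R : LCAMod F L M) (i : Fin 2) (a b : A) (v : M)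
    (ν : Fin 2 → ℕ) :
    lambdaCoeff ν (lambdaAct R (X i) (1 ⊗ₜ a) (lambdaAct R (X (i.succAbove 0)) (1 ⊗ₜ b) (1 ⊗ₜ v)))
      = R.act a (R.act b v (ν (i.succAbove 0))) (ν i) := by
  have hrename : lambdaAct R (X (i.succAbove 0)) (1 ⊗ₜ b) (1 ⊗ₜ v)
      = LambdaPoly.rename i.succAbove (lambdaAct R (X 0 : MvPolynomial (Fin 1) F) (1 ⊗ₜ b)
          (1 ⊗ₜ v)) := by
    simp [changeScalars_lambdaAct, changeScalars_tmul]
  rw [hrename, lambdaCoeff_lambdaAct, lambdaCoeff_lambdaAct_one_tmul]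
  rfl

theorem lambdaCoeff_X_add_X_pow_tmul (n : ℕ) (v : M) (ν : Fin 2 → ℕ) :
    lambdaCoeff ν (((X 0 + X 1) ^ n : MvPolynomial (Fin 2) F) ⊗ₜ[F] v)
      = if n = ν 0 + ν 1 then ((ν 0 + ν 1).choose (ν 0) : F) • v else 0 := by
  rw [lambdaCoeff_tmul, MvPolynomial.coeff_add_pow]
  simp only [Finset.HasAntidiagonal.mem_antidiagonal, Finsupp.equivFunOnFinite_symm_apply_apply]
  split_ifs with h h' h'
  · rw [h']
  · exact absurd h.symm h'
  · exact absurd h'.symm h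
  · simp

theorem lambdaCoeff_lambdaAct_bracket (R : LCAMod F L M) (a b : A) (v : M) (ν : Fin 2 → ℕ) :
    lambdaCoeff ν (lambdaAct R (X 0 + X 1 : MvPolynomial (Fin 2) F)
        (lambdaAct L.adjoint (X 0) (1 ⊗ₜ a) (1 ⊗ₜ b)) (1 ⊗ₜ v))
      = ∑ j ∈ Finset.range (ν 0 + 1),
          ((ν 1 + j).choose j : F) • R.act (L.br a b (ν 0 - j)) v (ν 1 + j) := by
  have hinner (p : ℕ) (c : A) :
      lambdaCoeff ν (lambdaAct R (X 0 + X 1 : MvPolynomial (Fin 2) F) ((X 0 ^ p) ⊗ₜ c) (1 ⊗ₜ v))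
        = if p ≤ ν 0 then
            ((ν 0 - p + ν 1).choose (ν 0 - p) : F) • R.act c v (ν 0 - p + ν 1) else 0 := by
    rw [TensorProduct.tmul_eq_smul_one_tmul, map_smul, LinearMap.smul_apply, lambdaCoeff_X_pow_smul,
      lambdaAct_one_tmul, map_finsuppSum]
    simp only [lambdaCoeff_X_add_X_pow_tmul]
    refine if_congr Iff.rfl ?_ rfl
    rw [Finsupp.sum_ite_eq']
    simp +contextual [actFinsupp_apply]
  rw [lambdaAct_one_tmul, Finsupp.sum, map_sum, LinearMap.sum_apply, map_sum]
  simp only [hinner]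
  refine (finsuppSum_ite_le (actFinsupp L.adjoint a b) (ν 0) (g := fun p c =>
    ((ν 0 - p + ν 1).choose (ν 0 - p) : F) • R.act c v (ν 0 - p + ν 1)) (by simp)).trans ?_
  rw [← Finset.sum_range_reflect]
  refine Finset.sum_congr rfl fun j hj => ?_
  have hj : ν 0 - (ν 0 + 1 - 1 - j) = j := by rw [Finset.mem_range] at hj; lia
  rw [hj, add_comm j]
  rfl

theorem lambdaAct_jacobi {S : Type*} [CommRing S] [Algebra F S] (R : LCAMod F L M) (Λ Γ : S)
    (x y : S ⊗[F] A) (z : S ⊗[F] M) :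
    lambdaAct R Λ x (lambdaAct R Γ y z) - lambdaAct R Γ y (lambdaAct R Λ x z)
      = lambdaAct R (Λ + Γ) (lambdaAct L.adjoint Λ x y) z := by
  induction x using baseChange_induction with
  | add x x' hx hx' =>
    simp only [map_add, LinearMap.add_apply, ← hx, ← hx']
    abel
  | smul s x hx => simp only [map_smul, LinearMap.smul_apply, ← hx, smul_sub]
  | one_tmul a =>
    induction y using baseChange_induction with
    | add y y' hy hy' =>
      simp only [map_add, LinearMap.add_apply, ← hy, ← hy']
      abel
    | smul s y hy => simp only [map_smul, LinearMap.smul_apply, ← hy, smul_sub]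
    | one_tmul b =>
      induction z using baseChange_induction with
      | add z z' hz hz' =>
        simp only [map_add, ← hz, ← hz']
        abel
      | smul s z hz => simp only [map_smul, ← hz, smul_sub]
      | one_tmul v =>
        have universal : lambdaAct R (X 0 : MvPolynomial (Fin 2) F) (1 ⊗ₜ a)
              (lambdaAct R (X 1) (1 ⊗ₜ b) (1 ⊗ₜ v))
            - lambdaAct R (X 1) (1 ⊗ₜ b) (lambdaAct R (X 0) (1 ⊗ₜ a) (1 ⊗ₜ v))
            = lambdaAct R (X 0 + X 1) (lambdaAct L.adjoint (X 0) (1 ⊗ₜ a) (1 ⊗ₜ b)) (1 ⊗ₜ v) :=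
          LambdaPoly.ext fun ν => by
            rw [map_sub, lambdaCoeff_lambdaAct_bracket, ← R.jacobi]
            exact congrArg₂ (· - ·) (lambdaCoeff_lambdaAct_lambdaAct R 0 a b v ν)
              (lambdaCoeff_lambdaAct_lambdaAct R 1 b a v ν)
        simpa [changeScalars_lambdaAct, changeScalars_tmul] using
          congr(changeScalars M (aeval ![Λ, Γ]) $universal)

end LambdaAction

section Dag

variable {F : Type*} [Field F] {N : Type*} [AddCommGroup N] [Module F N] {K : ℕ}

theorem prod_X_pow_eq_monomial (μ : Fin K → ℕ) :
    (∏ i, X i ^ μ i : MvPolynomial (Fin K) F)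
      = MvPolynomial.monomial (Finsupp.equivFunOnFinite.symm μ) 1 := by
  simp [MvPolynomial.monomial_eq, Finsupp.prod_fintype]

theorem X_mul_prod_X_pow (j : Fin K) (μ : Fin K → ℕ) :
    (X j * ∏ i, X i ^ μ i : MvPolynomial (Fin K) F)
      = ∏ i, X i ^ (Pi.single j 1 + μ : Fin K → ℕ) i := by
  have hX : (X j : MvPolynomial (Fin K) F) = ∏ i, X i ^ (Pi.single j 1 : Fin K → ℕ) i := by
    simp [Pi.single_apply]
  simp only [Pi.add_apply, pow_add, Finset.prod_mul_distrib, ← hX]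

/-- The substitution of `λ† = -λ₁ - ⋯ - λ_K - ∂` for the last variable, where `∂` acts on the
coefficients. -/
noncomputable def dag (D : N →ₗ[F] N) : LambdaPoly F (K + 1) N →ₗ[F] LambdaPoly F K N :=
  TensorProduct.lift <| (MvPolynomial.basisMonomials (Fin (K + 1)) F).constr F fun μ =>
    (negShift D (∑ i, X i) ^ μ (Fin.last K)).restrictScalars F ∘ₗ
      TensorProduct.mk F _ N (∏ i : Fin K, X i ^ μ i.castSucc)

theorem dag_prod_X_pow_tmul (D : N →ₗ[F] N) (μ : Fin (K + 1) → ℕ) (v : N) :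
    dag D ((∏ i, X i ^ μ i) ⊗ₜ v)
      = (negShift D (∑ i, X i) ^ μ (Fin.last K)) ((∏ i : Fin K, X i ^ μ i.castSucc) ⊗ₜ[F] v) := by
  rw [prod_X_pow_eq_monomial, show MvPolynomial.monomial (Finsupp.equivFunOnFinite.symm μ) (1 : F)
    = MvPolynomial.basisMonomials _ F _ from rfl, dag, TensorProduct.lift.tmul,
    Module.Basis.constr_basis]
  rfl

theorem dag_X_castSucc_smul (D : N →ₗ[F] N) (i : Fin K) (φ : LambdaPoly F (K + 1) N) :
    dag D ((X i.castSucc : MvPolynomial (Fin (K + 1)) F) • φ)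
      = (X i : MvPolynomial (Fin K) F) • dag D φ := by
  induction φ using LambdaPoly.induction_monomial with
  | add φ ψ hφ hψ => simp only [smul_add, map_add, hφ, hψ]
  | monomial μ v =>
    rw [TensorProduct.smul_tmul', smul_eq_mul, X_mul_prod_X_pow, dag_prod_X_pow_tmul,
      dag_prod_X_pow_tmul, ← map_smul, TensorProduct.smul_tmul', smul_eq_mul, X_mul_prod_X_pow]
    simp [Pi.single_apply]

theorem dag_X_last_smul (D : N →ₗ[F] N) (φ : LambdaPoly F (K + 1) N) :
    dag D ((X (Fin.last K) : MvPolynomial (Fin (K + 1)) F) • φ)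
      = negShift D (∑ i, X i) (dag D φ) := by
  induction φ using LambdaPoly.induction_monomial with
  | add φ ψ hφ hψ => simp only [smul_add, map_add, hφ, hψ]
  | monomial μ v =>
    rw [TensorProduct.smul_tmul', smul_eq_mul, X_mul_prod_X_pow, dag_prod_X_pow_tmul,
      dag_prod_X_pow_tmul, ← Module.End.mul_apply, ← pow_succ']
    simp [Fin.castSucc_ne_last, add_comm 1]

theorem commute_negShift_baseChange {S : Type*} [CommRing S] [Algebra F S] (D : N →ₗ[F] N)
    (Λ : S) : Commute (negShift D Λ) (D.baseChange S) :=
  LinearMap.ext fun x => by simp [negShift_apply]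

theorem dag_baseChange (D : N →ₗ[F] N) (φ : LambdaPoly F (K + 1) N) :
    dag D (D.baseChange _ φ) = D.baseChange _ (dag D φ) := by
  induction φ using LambdaPoly.induction_monomial with
  | add φ ψ hφ hψ => simp only [map_add, hφ, hψ]
  | monomial μ v =>
    rw [LinearMap.baseChange_tmul, dag_prod_X_pow_tmul, dag_prod_X_pow_tmul,
      ← LinearMap.baseChange_tmul, ← Module.End.mul_apply, ← Module.End.mul_apply,
      ((commute_negShift_baseChange D _).pow_left _).eq]

theorem dag_total_shift (D : N →ₗ[F] N) (φ : LambdaPoly F (K + 1) N) :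
    dag D (D.baseChange _ φ + (∑ i, X i : MvPolynomial (Fin (K + 1)) F) • φ) = 0 := by
  simp only [Fin.sum_univ_castSucc, add_smul, Finset.sum_smul, map_add, map_sum,
    dag_X_castSucc_smul, dag_X_last_smul, dag_baseChange, negShift_apply]
  abel

theorem dag_rename_castSucc (D : N →ₗ[F] N) (φ : LambdaPoly F K N) :
    dag D (LambdaPoly.rename Fin.castSucc φ) = φ := by
  induction φ using LambdaPoly.induction_monomial with
  | add φ ψ hφ hψ => simp only [map_add, hφ, hψ]
  | monomial μ v =>
    have : LambdaPoly.rename Fin.castSucc ((∏ i, X i ^ μ i) ⊗ₜ[F] v)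
        = (∏ i, X i ^ (Fin.snoc μ 0 : Fin (K + 1) → ℕ) i) ⊗ₜ[F] v := by
      simp [changeScalars_tmul, Fin.prod_univ_castSucc]
    rw [this, dag_prod_X_pow_tmul]
    simp

theorem dag_sub_mem_range (D : N →ₗ[F] N) {S : Type*} [CommRing S] [Algebra F S]
    (Λ : Fin (K + 1) → S) (φ : LambdaPoly F (K + 1) N) :
    changeScalars N (aeval (Fin.init Λ)) (dag D φ) - changeScalars N (aeval Λ) φ
      ∈ LinearMap.range (D.baseChange S + (∑ i, Λ i) • LinearMap.id) := by
  induction φ using LambdaPoly.induction_monomial with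
  | add φ ψ hφ hψ =>
    simp only [map_add, add_sub_add_comm]
    exact add_mem hφ hψ
  | monomial μ v =>
    have := negShift_pow_sub_mem_range D (∑ i, Fin.init Λ i) (Λ (Fin.last K)) (μ (Fin.last K))
      ((∏ i, Fin.init Λ i ^ μ i.castSucc) ⊗ₜ v)
    rw [dag_prod_X_pow_tmul, changeScalars_negShift_pow, changeScalars_tmul, changeScalars_tmul]
    simpa [Fin.prod_univ_castSucc, Fin.sum_univ_castSucc, TensorProduct.smul_tmul', mul_comm,
      Fin.init] using this

theorem mnom_eq (m : Fin K → ℕ) (s : ℕ) :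
    mnom m s = (wt m + s).choose (wt m) * Nat.multinomial Finset.univ m := by
  refine Nat.div_eq_of_eq_mul_right (by positivity) ?_
  have hmult : _ = (wt m).factorial := Nat.multinomial_spec Finset.univ m
  have hchoose := Nat.choose_mul_factorial_mul_factorial (Nat.le_add_right (wt m) s)
  rw [Nat.add_sub_cancel_left, ← hmult] at hchoose
  rw [← hchoose]
  ring

theorem coeff_sum_X_pow (n : ℕ) (m : Fin K → ℕ) :
    ((∑ i, X i) ^ n : MvPolynomial (Fin K) F).coeff (Finsupp.equivFunOnFinite.symm m)
      = if wt m = n then (Nat.multinomial Finset.univ m : F) else 0 := by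
  rw [MvPolynomial.coeff_sum_X_pow_of_fintype, Finsupp.sum_fintype _ _ (by simp),
    ← Finsupp.multinomial_of_support_subset (Finset.subset_univ _)]
  simp only [Nat.cast_ite, Nat.cast_zero]
  rfl

theorem substDag_add (D : N →ₗ[F] N) {q q' : (Fin K → ℕ) → ℕ → N}
    (hq : ∀ ρ, (Function.support (q ρ)).Finite) (hq' : ∀ ρ, (Function.support (q' ρ)).Finite)
    (ν : Fin K → ℕ) :
    substDag D (fun ρ n => q ρ n + q' ρ n) ν = substDag D q ν + substDag D q' ν := by
  have hfin {q : (Fin K → ℕ) → ℕ → N} (hq : ∀ ρ, (Function.support (q ρ)).Finite)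
      (ρ : Fin K → ℕ) (w : ℕ) (r : ℕ → F) :
      (Function.support fun s => r s • (D ^ s) (q ρ (w + s))).Finite :=
    ((hq ρ).preimage (add_right_injective w).injOn).subset fun s hs hs' => hs (by simp [hs'])
  simp only [substDag, ← Finset.sum_add_distrib, map_add, smul_add]
  exact Finset.sum_congr rfl fun ρ _ => finsum_add_distrib (hfin hq ρ _ _) (hfin hq' ρ _ _)

theorem sum_antidiagonal_ite_fst {P : Type*} [AddCommMonoid P] (w n : ℕ) (f : ℕ → P) :
    (∑ p ∈ Finset.HasAntidiagonal.antidiagonal n, if w = p.1 then f p.2 else 0)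
      = ∑ᶠ s, if w + s = n then f s else 0 := by
  rcases lt_or_ge n w with h | h
  · rw [Finset.sum_eq_zero, finsum_eq_zero_of_forall_eq_zero]
    · exact fun s => if_neg (by lia)
    · exact fun p hp => if_neg (by rw [Finset.HasAntidiagonal.mem_antidiagonal] at hp; lia)
  · obtain ⟨s, rfl⟩ := Nat.exists_eq_add_of_le h
    rw [Finset.sum_eq_single (w, s), finsum_eq_single _ s]
    · simp
    · exact fun s' h' => if_neg (by lia)
    · rintro ⟨p, q⟩ hpq hne
      rw [Finset.HasAntidiagonal.mem_antidiagonal] at hpq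
      exact if_neg (by rintro rfl; exact hne (by simpa using hpq))
    · simp

theorem lambdaCoeff_negShift_pow_prod_X_pow_tmul (D : N →ₗ[F] N) (n : ℕ) (μ ν : Fin K → ℕ)
    (v : N) :
    lambdaCoeff ν ((negShift D (∑ i, X i) ^ n) ((∏ i, X i ^ μ i) ⊗ₜ v))
      = if μ ∈ Finset.Iic ν then ∑ᶠ s, if wt (ν - μ) + s = n then
          ((-1 : F) ^ n * (mnom (ν - μ) s : F)) • (D ^ s) v else 0
        else 0 := by
  have hterm (p : ℕ × ℕ) (w : N) :
      lambdaCoeff ν (((∑ i, X i) ^ p.1 * ∏ i, X i ^ μ i : MvPolynomial (Fin K) F) ⊗ₜ[F] w)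
        = if μ ∈ Finset.Iic ν then if wt (ν - μ) = p.1 then
            (Nat.multinomial Finset.univ (ν - μ) : F) • w else 0 else 0 := by
    rw [lambdaCoeff_tmul, prod_X_pow_eq_monomial, MvPolynomial.coeff_mul_monomial', mul_one]
    rw [show Finsupp.equivFunOnFinite.symm ν - Finsupp.equivFunOnFinite.symm μ
      = Finsupp.equivFunOnFinite.symm (ν - μ) from Finsupp.ext fun _ => rfl,
      coeff_sum_X_pow, ite_smul, zero_smul, ite_smul, zero_smul]
    exact if_congr (Finset.mem_Iic (a := ν)).symm rfl rfl
  rw [negShift_pow_tmul, map_sum]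
  simp only [hterm]
  split_ifs
  · rw [← sum_antidiagonal_ite_fst]
    refine Finset.sum_congr rfl fun p hp => if_ctx_congr Iff.rfl (fun hw => ?_) fun _ => rfl
    rw [mnom_eq, hw, Finset.HasAntidiagonal.mem_antidiagonal.mp hp, smul_smul]
    push_cast
    ring_nf
  · exact Finset.sum_const_zero

theorem substDag_monomial (D : N →ₗ[F] N) (μ ν : Fin K → ℕ) (m : ℕ) (v : N) :
    substDag D (fun ρ n => if ρ = μ ∧ n = m then v else 0) ν
      = if μ ∈ Finset.Iic ν then ∑ᶠ s, if wt (ν - μ) + s = m then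
          ((-1 : F) ^ m * (mnom (ν - μ) s : F)) • (D ^ s) v else 0
        else 0 := by
  have hterm (ρ : Fin K → ℕ) : ∑ᶠ s, ((-1 : F) ^ (wt (ν - ρ) + s) * (mnom (ν - ρ) s : F)) •
        (D ^ s) (if ρ = μ ∧ wt (ν - ρ) + s = m then v else 0)
      = if ρ = μ then ∑ᶠ s, if wt (ν - ρ) + s = m then
        ((-1 : F) ^ m * (mnom (ν - ρ) s : F)) • (D ^ s) v else 0 else 0 := by
    by_cases hρ : ρ = μ
    · simp only [hρ, true_and, if_true]
      refine finsum_congr fun s => ?_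
      split_ifs with h
      · rw [h]
      · rw [map_zero, smul_zero]
    · simp [hρ]
  exact (Finset.sum_congr rfl fun ρ _ => hterm ρ).trans (Finset.sum_ite_eq' ..)

theorem lambdaCoeff_dag (D : N →ₗ[F] N) (φ : LambdaPoly F (K + 1) N) (ν : Fin K → ℕ) :
    lambdaCoeff ν (dag D φ)
      = substDag D (fun ρ n => lambdaCoeff (Fin.snoc ρ n : Fin (K + 1) → ℕ) φ) ν := by
  have hfin (φ : LambdaPoly F (K + 1) N) (ρ : Fin K → ℕ) :
      (Function.support fun n => lambdaCoeff (Fin.snoc ρ n : Fin (K + 1) → ℕ) φ).Finite := by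
    have hinj : Function.Injective fun n => (Fin.snoc ρ n : Fin (K + 1) → ℕ) :=
      fun n n' h => by simpa using congrFun h (Fin.last K)
    exact (lambdaCoeff_finite_support φ).preimage hinj.injOn
  induction φ using LambdaPoly.induction_monomial with
  | add φ ψ hφ hψ =>
    simp only [map_add, hφ, hψ]
    exact (substDag_add D (hfin φ) (hfin ψ) ν).symm
  | monomial μ v =>
    rw [dag_prod_X_pow_tmul, lambdaCoeff_negShift_pow_prod_X_pow_tmul, ← substDag_monomial]
    congr 1
    funext ρ n
    rw [lambdaCoeff_tmul, prod_X_pow_eq_monomial, MvPolynomial.coeff_monomial, ite_smul,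
      one_smul, zero_smul]
    refine if_congr (P := ρ = Fin.init μ ∧ n = μ (Fin.last K)) (Iff.symm ?_) rfl rfl
    conv_lhs => rw [EmbeddingLike.apply_eq_iff_eq, eq_comm, ← Fin.snoc_init_self μ]
    exact Fin.snoc_inj

end Dag

/-! ### Reduced families -/

section System

variable {F : Type*} [Field F] {A M : Type*} [AddCommGroup A] [Module F A] [AddCommGroup M]
  [Module F M] {L : LCA F A}

theorem lambdaCoeff_dag_lambdaAct_one_tmul (R : LCAMod F L M) (D : M →ₗ[F] M) {K : ℕ} (a : A)
    (v : M) (ν : Fin K → ℕ) :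
    lambdaCoeff ν (dag D (lambdaAct R (X (Fin.last K)) (1 ⊗ₜ a) (1 ⊗ₜ v)))
      = ∑ᶠ s, ((-1 : F) ^ (wt ν + s) * (mnom ν s : F)) • (D ^ s) (R.act a v (wt ν + s)) := by
  have hone (ρ : Fin K → ℕ) : lambdaCoeff ρ (1 ⊗ₜ[F] v) = if ρ = 0 then v else 0 := by
    rw [lambdaCoeff_tmul, MvPolynomial.coeff_one, ite_smul, one_smul, zero_smul]
    refine if_congr ?_ rfl rfl
    exact eq_comm.trans
      (EmbeddingLike.map_eq_zero_iff (f := (Finsupp.linearEquivFunOnFinite ℕ ℕ (Fin K)).symm))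
  have hcoeff (ρ : Fin K → ℕ) (n : ℕ) : lambdaCoeff (Fin.snoc ρ n : Fin (K + 1) → ℕ)
      (lambdaAct R (X (Fin.last K)) (1 ⊗ₜ a) (1 ⊗ₜ v)) = if ρ = 0 then R.act a v n else 0 := by
    have h := lambdaCoeff_lambdaAct R (Fin.last K) a (1 ⊗ₜ v) (Fin.snoc ρ n : Fin (K + 1) → ℕ)
    rw [changeScalars_tmul, map_one, Fin.removeNth_last, Fin.init_snoc, Fin.snoc_last, hone] at h
    rw [h]
    split_ifs <;> simp
  simp only [lambdaCoeff_dag, substDag, hcoeff]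
  rw [Finset.sum_eq_single_of_mem 0 (Finset.mem_Iic.2 zero_le)]
  · simp
  · intro ρ _ hρ
    simp [hρ]

theorem finsum_eq_finsum_add {P : Type*} [AddCommMonoid P] {f : ℕ → P} (m : ℕ)
    (hf : ∀ n < m, f n = 0) : ∑ᶠ n, f n = ∑ᶠ s, f (m + s) := by
  rw [← finsum_mem_univ, ← finsum_mem_range (add_right_injective m)]
  refine finsum_mem_inter_support_eq' f _ _ fun n hn => ?_
  have hmn : m ≤ n := not_lt.1 fun h => hn (hf n h)
  simpa using ⟨n - m, Nat.add_sub_cancel' hmn⟩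

theorem lambdaAct_adjoint_skew_universal (L : LCA F A) (a b : A) :
    lambdaAct L.adjoint (X 0 : MvPolynomial (Fin 1) F) (1 ⊗ₜ a) (1 ⊗ₜ b)
      = -dag L.D (lambdaAct L.adjoint (X (Fin.last 1)) (1 ⊗ₜ b) (1 ⊗ₜ a)) := by
  refine LambdaPoly.ext fun ν => ?_
  rw [map_neg, lambdaCoeff_dag_lambdaAct_one_tmul, lambdaCoeff_lambdaAct_one_tmul]
  refine (L.skew a b (ν 0)).trans (congrArg _ ?_)
  have hν : ν = fun _ => ν 0 := funext fun i => congrArg ν (Subsingleton.elim i 0)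
  generalize ν 0 = m at hν
  subst hν
  refine (finsum_eq_finsum_add m fun n hn => ?_).trans (finsum_congr fun s => ?_)
  · simp [Nat.choose_eq_zero_of_lt hn]
  · simp [mnom_eq, wt, LCA.adjoint]

variable {S : Type*} [CommRing S] [Algebra F S]

theorem lambdaAct_adjoint_skew (L : LCA F A) (Λ Γ : S) (x y : S ⊗[F] A) :
    lambdaAct L.adjoint Λ x y + lambdaAct L.adjoint Γ y x
      ∈ LinearMap.range (L.D.baseChange S + (Λ + Γ) • LinearMap.id) := by
  induction x using baseChange_induction with
  | add x x' hx hx' =>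
    rw [map_add, LinearMap.add_apply, map_add, add_add_add_comm]
    exact add_mem hx hx'
  | smul s x hx =>
    simp only [map_smul, LinearMap.smul_apply, ← smul_add]
    exact Submodule.smul_mem _ s hx
  | one_tmul a =>
    induction y using baseChange_induction with
    | add y y' hy hy' =>
      rw [map_add, map_add, LinearMap.add_apply, add_add_add_comm]
      exact add_mem hy hy'
    | smul s y hy =>
      simp only [map_smul, LinearMap.smul_apply, ← smul_add]
      exact Submodule.smul_mem _ s hy
    | one_tmul b =>
      have h := dag_sub_mem_range L.D ![Λ, Γ]
        (lambdaAct L.adjoint (X (Fin.last 1)) (1 ⊗ₜ b) (1 ⊗ₜ a))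
      rw [← neg_eq_iff_eq_neg.2 (lambdaAct_adjoint_skew_universal L a b), ← neg_mem_iff] at h
      simpa [changeScalars_lambdaAct, changeScalars_tmul, Fin.init, add_comm] using h

theorem lambdaAct_mem_range (R : LCAMod F L M) (Λ Γ : S) (x : S ⊗[F] A) {y : S ⊗[F] M}
    (hy : y ∈ LinearMap.range (R.D.baseChange S + Γ • LinearMap.id)) :
    lambdaAct R Λ x y ∈ LinearMap.range (R.D.baseChange S + (Λ + Γ) • LinearMap.id) := by
  obtain ⟨u, rfl⟩ := hy
  refine ⟨lambdaAct R Λ x u, ?_⟩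
  simp only [LinearMap.add_apply, LinearMap.smul_apply, LinearMap.id_apply, map_add, map_smul,
    lambdaAct_D_right, add_smul, add_assoc]

variable (S) in
/-- The families `(f_Γ)_{Γ ∈ S}` with `f_Γ` in the image of `∂ + Γ` for all `Γ`. -/
def nullFamilies (R : LCAMod F L M) : Submodule S (S → S ⊗[F] M) :=
  Submodule.pi Set.univ fun Γ => LinearMap.range (R.D.baseChange S + Γ • LinearMap.id)

variable (S) in
/-- The product over `Γ ∈ S` of the modules `(S ⊗ M) / (∂ + Γ)`, the values of the cochains on
symbols whose `λ`'s have sum `Γ`. -/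
abbrev ReducedFamilies (R : LCAMod F L M) : Type _ := (S → S ⊗[F] M) ⧸ nullFamilies S R

/-- The action of the symbol `x_Λ` on families: it raises the degree `Γ` by `Λ`. -/
noncomputable def shiftAct (R : LCAMod F L M) (Λ : S) :
    S ⊗[F] A →ₗ[S] (S → S ⊗[F] M) →ₗ[S] (S → S ⊗[F] M) :=
  LinearMap.mk₂ S (fun x f Γ => lambdaAct R Λ x (f (Γ - Λ)))
    (fun x y f => by ext Γ; simp) (fun s x f => by ext Γ; simp)
    (fun x f g => by ext Γ; simp) (fun s x f => by ext Γ; simp)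

theorem shiftAct_apply (R : LCAMod F L M) (Λ : S) (x : S ⊗[F] A) (f : S → S ⊗[F] M) (Γ : S) :
    shiftAct R Λ x f Γ = lambdaAct R Λ x (f (Γ - Λ)) := rfl

theorem nullFamilies_le_comap_shiftAct (R : LCAMod F L M) (Λ : S) (x : S ⊗[F] A) :
    nullFamilies S R ≤ (nullFamilies S R).comap (shiftAct R Λ x) := fun f hf Γ _ => by
  simpa only [add_sub_cancel, shiftAct_apply, SetLike.mem_coe] using
    lambdaAct_mem_range R Λ (Γ - Λ) x (hf (Γ - Λ) trivial)

/-- The action of the symbol `x_Λ` on reduced families. -/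
noncomputable def reducedAct (R : LCAMod F L M) (Λ : S) :
    S ⊗[F] A →ₗ[S] ReducedFamilies S R →ₗ[S] ReducedFamilies S R where
  toFun x := (nullFamilies S R).mapQ _ (shiftAct R Λ x) (nullFamilies_le_comap_shiftAct R Λ x)
  map_add' x y := Submodule.linearMap_qext _ (LinearMap.ext fun f => by simp)
  map_smul' s x := Submodule.linearMap_qext _ (LinearMap.ext fun f => by simp)

theorem reducedAct_mk (R : LCAMod F L M) (Λ : S) (x : S ⊗[F] A) (f : S → S ⊗[F] M) :
    reducedAct R Λ x ((nullFamilies S R).mkQ f) = (nullFamilies S R).mkQ (shiftAct R Λ x f) :=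
  rfl

variable (S) in
/-- The symbols `x_Λ` with `x ∈ S ⊗ A` and `Λ ∈ S`, acting on reduced families. -/
noncomputable def symbolSystem (R : LCAMod F L M) :
    SymbolSystem S (S ⊗[F] A) (ReducedFamilies S R) where
  D := L.D.baseChange S
  br := lambdaAct L.adjoint
  act := reducedAct R
  br_D_left Λ x y := by
    rw [map_add, LinearMap.add_apply, map_smul, lambdaAct_D_left, LinearMap.smul_apply,
      neg_add_cancel]
  br_D_right Λ Γ x y := by
    rw [map_add, map_smul, show L.D = L.adjoint.D from rfl, lambdaAct_D_right, add_smul, add_assoc]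
  act_D Λ x v := by
    obtain ⟨f, rfl⟩ := Submodule.mkQ_surjective _ v
    have : shiftAct R Λ (L.D.baseChange S x + Λ • x) f = 0 := funext fun Γ => by
      simp [shiftAct_apply, lambdaAct_D_left]
    rw [reducedAct_mk, this, map_zero]
  br_skew := lambdaAct_adjoint_skew L
  br_jacobi := lambdaAct_jacobi L.adjoint
  act_jacobi Λ Γ x y v := by
    obtain ⟨f, rfl⟩ := Submodule.mkQ_surjective _ v
    simp only [reducedAct_mk, ← map_sub]
    congr 1
    funext Θ
    simp only [Pi.sub_apply, shiftAct_apply, ← lambdaAct_jacobi, sub_sub, add_comm Γ Λ]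

open Classical in
/-- The inclusion of the component of degree `Γ`. -/
noncomputable def component (R : LCAMod F L M) (Γ : S) : S ⊗[F] M →ₗ[S] ReducedFamilies S R :=
  (nullFamilies S R).mkQ ∘ₗ LinearMap.single S (fun _ => S ⊗[F] M) Γ

theorem component_eq_zero {R : LCAMod F L M} {Γ : S} {y : S ⊗[F] M} :
    component R Γ y = 0 ↔ y ∈ LinearMap.range (R.D.baseChange S + Γ • LinearMap.id) := by
  classical
  rw [component, LinearMap.comp_apply, Submodule.mkQ_apply, Submodule.Quotient.mk_eq_zero]
  refine ⟨fun h => by simpa using h Γ trivial, fun hy Θ _ => ?_⟩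
  obtain rfl | hΘ := eq_or_ne Θ Γ
  · simpa using hy
  · simp [Pi.single_eq_of_ne hΘ]

theorem component_eq_component {R : LCAMod F L M} {Γ : S} {y z : S ⊗[F] M} :
    component R Γ y = component R Γ z
      ↔ y - z ∈ LinearMap.range (R.D.baseChange S + Γ • LinearMap.id) := by
  rw [← component_eq_zero, map_sub, sub_eq_zero]

theorem act_component (R : LCAMod F L M) (Λ Γ : S) (x : S ⊗[F] A) (y : S ⊗[F] M) :
    (symbolSystem S R).act Λ x (component R Γ y) = component R (Λ + Γ) (lambdaAct R Λ x y) := by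
  classical
  refine congrArg (nullFamilies S R).mkQ (funext fun Θ => ?_)
  rw [shiftAct_apply, LinearMap.single_apply, LinearMap.single_apply, Pi.single_apply,
    Pi.single_apply, apply_ite (lambdaAct R Λ x), map_zero]
  exact if_congr sub_eq_iff_eq_add' rfl rfl

end System

section MultilinearBaseChange

variable {F : Type*} [CommRing F] {S : Type*} [CommRing S] [Algebra F S] {ι : Type*} [Finite ι]
  {A W : Type*} [AddCommGroup A] [Module F A] [Module.Free F A] [AddCommGroup W] [Module S W]

theorem multilinearMap_baseChange_ext {f g : MultilinearMap S (fun _ : ι => S ⊗[F] A) W}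
    (h : ∀ a : ι → A, f (fun i => 1 ⊗ₜ a i) = g fun i => 1 ⊗ₜ a i) : f = g :=
  Module.Basis.ext_multilinear (fun _ => (Module.Free.chooseBasis F A).baseChange S) fun v => by
    simpa only [Module.Basis.baseChange_apply] using h fun i => Module.Free.chooseBasis F A (v i)

variable [Module F W] [IsScalarTower F S W]

variable (S) in
/-- The `S`-multilinear extension of an `F`-multilinear map. It is defined on the basis of
`(S ⊗ A)^{⊗ι}` coming from a basis of `A`. -/
noncomputable def multilinearBaseChange (f : MultilinearMap F (fun _ : ι => A) W) :
    MultilinearMap S (fun _ : ι => S ⊗[F] A) W :=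
  ((Basis.piTensorProduct fun _ : ι => (Module.Free.chooseBasis F A).baseChange S).constr S
    fun p => f fun i => Module.Free.chooseBasis F A (p i)).compMultilinearMap
      (PiTensorProduct.tprod S)

theorem multilinearBaseChange_one_tmul (f : MultilinearMap F (fun _ : ι => A) W) (a : ι → A) :
    multilinearBaseChange S f (fun i => 1 ⊗ₜ a i) = f a := by
  suffices ((multilinearBaseChange S f).restrictScalars F).compLinearMap
      (fun _ => TensorProduct.mk F S A 1) = f from congr($this a)
  refine Module.Basis.ext_multilinear (fun _ => Module.Free.chooseBasis F A) fun v => ?_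
  have htprod : PiTensorProduct.tprod S (fun i => (1 : S) ⊗ₜ[F] Module.Free.chooseBasis F A (v i))
      = Basis.piTensorProduct (fun _ : ι => (Module.Free.chooseBasis F A).baseChange S) v := by
    simp only [Basis.piTensorProduct_apply, Module.Basis.baseChange_apply]
  exact (congrArg _ htprod).trans (Module.Basis.constr_basis _ S _ v)

theorem multilinearBaseChange_update_shift [DecidableEq ι] {D : A →ₗ[F] A} {Λ : S} {j : ι}
    {f : MultilinearMap F (fun _ : ι => A) W}
    (hf : ∀ a, f (Function.update a j (D (a j))) = -(Λ • f a)) (x : ι → S ⊗[F] A)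
    (p : S ⊗[F] A) :
    multilinearBaseChange S f (Function.update x j (D.baseChange S p + Λ • p)) = 0 := by
  have happly (g : MultilinearMap S (fun _ : ι => S ⊗[F] A) W) (y : ι → S ⊗[F] A) :
      g.compLinearMap (Function.update (fun _ => LinearMap.id) j
        (D.baseChange S + Λ • LinearMap.id)) y
      = g (Function.update y j (D.baseChange S (y j) + Λ • y j)) := by
    refine congrArg g (funext fun i => ?_)
    obtain rfl | hij := eq_or_ne i j <;> simp [*]
  suffices h : (multilinearBaseChange S f).compLinearMap (Function.update (fun _ => LinearMap.id) j
      (D.baseChange S + Λ • LinearMap.id)) = 0 by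
    simpa [happly] using congr($h (Function.update x j p))
  refine multilinearMap_baseChange_ext fun a => ?_
  have hupdate : (Function.update (fun i => (1 : S) ⊗ₜ[F] a i) j (1 ⊗ₜ D (a j)))
      = fun i => 1 ⊗ₜ Function.update a j (D (a j)) i :=
    funext fun i => (Function.apply_update (fun _ z => (1 : S) ⊗ₜ[F] z) a j (D (a j)) i).symm
  rw [happly, LinearMap.baseChange_tmul, MultilinearMap.map_update_add,
    MultilinearMap.map_update_smul, Function.update_eq_self, hupdate,
    multilinearBaseChange_one_tmul, multilinearBaseChange_one_tmul, hf, neg_add_cancel]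
  rfl

theorem multilinearBaseChange_comp_perm {σ : Equiv.Perm ι} {n : ℤ}
    {f g : MultilinearMap F (fun _ : ι => A) W} (h : ∀ a, f (a ∘ σ) = n • g a)
    (x : ι → S ⊗[F] A) :
    multilinearBaseChange S f (x ∘ σ) = n • multilinearBaseChange S g x := by
  suffices heq : (multilinearBaseChange S f).domDomCongr σ = n • multilinearBaseChange S g from
    congr($heq x)
  refine multilinearMap_baseChange_ext fun a => ?_
  rw [MultilinearMap.domDomCongr_apply, smul_apply, multilinearBaseChange_one_tmul,
    multilinearBaseChange_one_tmul]
  exact h a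

end MultilinearBaseChange

/-! ### Poly-`λ`-brackets as cochains -/

section LambdaEval

variable {F : Type*} [Field F] {A M : Type*} [AddCommGroup A] [Module F A] [AddCommGroup M]
  [Module F M] {L : LCA F A} {S : Type*} [CommRing S] [Algebra F S] {k K : ℕ}

/-- The value at `λ = Λ` of the value `φ` of a `(k+1)`-`λ`-bracket. The variable `λ_{k+1}`, which
does not occur in `φ`, is accounted for by the degree `Λ₁ + ⋯ + Λ_{k+1}` of the result. -/
noncomputable def lambdaEval (R : LCAMod F L M) (Λ : Fin (k + 1) → S) :
    LambdaPoly F k M →ₗ[F] ReducedFamilies S R :=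
  (component R (∑ i, Λ i)).restrictScalars F ∘ₗ changeScalars M (aeval (Fin.init Λ))

theorem lambdaEval_apply (R : LCAMod F L M) (Λ : Fin (k + 1) → S) (φ : LambdaPoly F k M) :
    lambdaEval R Λ φ = component R (∑ i, Λ i) (changeScalars M (aeval (Fin.init Λ)) φ) := rfl

theorem lambdaEval_X_smul (R : LCAMod F L M) (Λ : Fin (k + 1) → S) (i : Fin k)
    (φ : LambdaPoly F k M) :
    lambdaEval R Λ ((X i : MvPolynomial (Fin k) F) • φ) = Λ i.castSucc • lambdaEval R Λ φ := by
  rw [lambdaEval_apply, changeScalars_smul, MvPolynomial.aeval_X, map_smul, lambdaEval_apply]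
  rfl

theorem lambdaEval_total_shift (R : LCAMod F L M) (Λ : Fin (k + 1) → S) (φ : LambdaPoly F k M) :
    lambdaEval R Λ (R.D.baseChange _ φ + (∑ i, X i : MvPolynomial (Fin k) F) • φ)
      = -(Λ (Fin.last k) • lambdaEval R Λ φ) := by
  rw [eq_neg_iff_add_eq_zero, lambdaEval_apply, lambdaEval_apply, ← map_smul, ← map_add,
    component_eq_zero]
  refine ⟨changeScalars M (aeval (Fin.init Λ)) φ, ?_⟩
  rw [map_add, changeScalars_baseChange, changeScalars_smul, map_sum, LinearMap.add_apply,
    LinearMap.smul_apply, LinearMap.id_apply, add_assoc, ← add_smul, Fin.sum_univ_castSucc]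
  simp [Fin.init]

theorem lambdaEval_dag (R : LCAMod F L M) (Λ : Fin (k + 1) → S) (φ : LambdaPoly F (k + 1) M) :
    lambdaEval R Λ (dag R.D φ) = component R (∑ i, Λ i) (changeScalars M (aeval Λ) φ) :=
  component_eq_component.2 (dag_sub_mem_range R.D Λ φ)

theorem lambdaEval_dag_X_smul (R : LCAMod F L M) (Λ : Fin (k + 1) → S) (i : Fin (k + 1)) (p : ℕ)
    (φ : LambdaPoly F (k + 1) M) :
    lambdaEval R Λ (dag R.D ((X i ^ p : MvPolynomial (Fin (k + 1)) F) • φ))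
      = Λ i ^ p • lambdaEval R Λ (dag R.D φ) := by
  rw [lambdaEval_dag, changeScalars_smul, map_pow, MvPolynomial.aeval_X, map_smul, lambdaEval_dag]

theorem lambdaEval_dag_rename (R : LCAMod F L M) {Λ : Fin (K + 1) → S} {Γ : Fin (k + 1) → S}
    {e : Fin k → Fin (K + 1)} (he : Fin.init Γ = Λ ∘ e) (hsum : ∑ i, Γ i = ∑ i, Λ i)
    (φ : LambdaPoly F k M) :
    lambdaEval R Λ (dag R.D (LambdaPoly.rename e φ)) = lambdaEval R Γ φ := by
  rw [lambdaEval_dag, changeScalars_changeScalars, MvPolynomial.aeval_comp_rename, ← he, ← hsum,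
    lambdaEval_apply]

theorem lambdaEval_dag_lambdaAct (R : LCAMod F L M) (Λ : Fin (k + 2) → S) (i : Fin (k + 2)) (a : A)
    (φ : LambdaPoly F k M) :
    lambdaEval R Λ (dag R.D
        (lambdaAct R (X i) (1 ⊗ₜ a) (LambdaPoly.rename (i.succAbove ∘ Fin.castSucc) φ)))
      = (symbolSystem S R).act (Λ i) (1 ⊗ₜ a) (lambdaEval R (i.removeNth Λ) φ) := by
  rw [lambdaEval_dag, changeScalars_lambdaAct, changeScalars_changeScalars,
    MvPolynomial.aeval_comp_rename, lambdaEval_apply, act_component, Fin.sum_univ_succAbove _ i,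
    changeScalars_tmul, map_one, MvPolynomial.aeval_X]
  rfl

theorem lambdaEval_X_injective (R : LCAMod F L M) :
    Function.Injective (lambdaEval R (X : Fin (k + 1) → MvPolynomial (Fin (k + 1)) F)) := by
  refine (injective_iff_map_eq_zero _).2 fun φ hφ => ?_
  have haeval : aeval (Fin.init X) = MvPolynomial.rename (R := F) (Fin.castSucc (n := k)) :=
    MvPolynomial.algHom_ext fun i => by simp [Fin.init]
  rw [lambdaEval_apply, component_eq_zero, haeval] at hφ
  obtain ⟨ψ, hψ⟩ := hφ
  rw [← dag_rename_castSucc R.D φ]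
  exact (congrArg _ hψ.symm).trans (dag_total_shift R.D ψ)

end LambdaEval

section LambdaBracket

variable {F : Type*} [Field F] {A M : Type*} [AddCommGroup A] [Module F A] [AddCommGroup M]
  [Module F M] {L : LCA F A} {k : ℕ}

/-- The conditions B1, B2, B3 for a `(k+1)`-`λ`-bracket with values in `F[λ₁,…,λ_k] ⊗ M`; see
`isLambdaBracket_iff` for the comparison with the formulation in terms of coefficients. -/
structure IsLambdaBracket (R : LCAMod F L M) (C : (Fin (k + 1) → A) → LambdaPoly F k M) :
    Prop where
  map_update_add : ∀ a i x y,
    C (Function.update a i (x + y)) = C (Function.update a i x) + C (Function.update a i y)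
  map_update_smul : ∀ a i (r : F) x,
    C (Function.update a i (r • x)) = r • C (Function.update a i x)
  sesq_castSucc : ∀ a (i : Fin k) x, C (Function.update a i.castSucc (L.D x))
    = -((X i : MvPolynomial (Fin k) F) • C (Function.update a i.castSucc x))
  sesq_last : ∀ a x, C (Function.update a (Fin.last k) (L.D x))
    = R.D.baseChange _ (C (Function.update a (Fin.last k) x))
      + (∑ i, X i : MvPolynomial (Fin k) F) • C (Function.update a (Fin.last k) x)
  skew : ∀ a (σ : Equiv.Perm (Fin (k + 1))), C a = ((Equiv.Perm.sign σ : ℤˣ) : ℤ) •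
    dag R.D (LambdaPoly.rename (σ ∘ Fin.castSucc) (C (a ∘ σ)))

theorem lambdaCoeff_dag_rename_perm (D : M →ₗ[F] M) (σ : Equiv.Perm (Fin (k + 1)))
    (φ : LambdaPoly F k M) (ν : Fin k → ℕ) :
    lambdaCoeff ν (dag D (LambdaPoly.rename (σ ∘ Fin.castSucc) φ))
      = substDag D (fun ρ n => if (Fin.snoc ρ n : Fin (k + 1) → ℕ) (σ (Fin.last k)) = 0 then
          lambdaCoeff (fun i => (Fin.snoc ρ n : Fin (k + 1) → ℕ) (σ i.castSucc)) φ else 0) ν := by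
  classical
  have hrange (j : Fin (k + 1)) :
      j ∉ Set.range (σ ∘ Fin.castSucc) ↔ j = σ (Fin.last k) := by
    obtain ⟨i, rfl⟩ := σ.surjective j
    induction i using Fin.lastCases <;> simp [Fin.castSucc_ne_last]
  rw [lambdaCoeff_dag]
  congr 1
  funext ρ n
  rw [lambdaCoeff_rename (σ.injective.comp (Fin.castSucc_injective k))]
  exact if_congr (by simp only [hrange, forall_eq]) rfl rfl

theorem isLambdaBracket_iff {R : LCAMod F L M} {C : (Fin (k + 1) → A) → LambdaPoly F k M} :
    IsLambdaBracket R C ↔ IsCBr R k fun a ν => lambdaCoeff ν (C a) := by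
  constructor
  · rintro ⟨hadd, hsmul, hcast, hlast, hskew⟩
    refine ⟨fun a i x y => ?_, fun a i r x => ?_, fun a => lambdaCoeff_finite_support _,
      fun a i x ν => ?_, fun a x ν => ?_, fun a ν σ => ?_⟩
    · funext ν; simp [hadd]
    · funext ν; simp [hsmul]
    · rw [hcast, map_neg, lambdaCoeff_X_smul, apply_ite Neg.neg, neg_zero]
    · simp only [hlast, map_add, lambdaCoeff_baseChange, Finset.sum_smul, map_sum,
        lambdaCoeff_X_smul]
    · rw [hskew a σ, map_zsmul, lambdaCoeff_dag_rename_perm]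
  · rintro ⟨hadd, hsmul, -, hcast, hlast, hskew⟩
    refine ⟨fun a i x y => ?_, fun a i r x => ?_, fun a i x => ?_, fun a x => ?_, fun a σ => ?_⟩
      <;> refine LambdaPoly.ext fun ν => ?_
    · simpa using congrFun (hadd a i x y) ν
    · simpa using congrFun (hsmul a i r x) ν
    · rw [hcast, map_neg, lambdaCoeff_X_smul, apply_ite Neg.neg, neg_zero]
    · simp only [hlast, map_add, lambdaCoeff_baseChange, Finset.sum_smul, map_sum,
        lambdaCoeff_X_smul]
    · rw [map_zsmul, lambdaCoeff_dag_rename_perm]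
      exact hskew a ν σ

end LambdaBracket

section SymbolCochain

variable {F : Type*} [Field F] {A M : Type*} [AddCommGroup A] [Module F A] [AddCommGroup M]
  [Module F M] {L : LCA F A} {R : LCAMod F L M} {S : Type*} [CommRing S] [Algebra F S] {k : ℕ}
  {C : (Fin (k + 1) → A) → LambdaPoly F k M}

namespace IsLambdaBracket

theorem lambdaEval_update_D (h : IsLambdaBracket R C) (a : Fin (k + 1) → A) (i : Fin (k + 1))
    (x : A) (Λ : Fin (k + 1) → S) :
    lambdaEval R Λ (C (Function.update a i (L.D x)))
      = -(Λ i • lambdaEval R Λ (C (Function.update a i x))) := by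
  induction i using Fin.lastCases with
  | last => rw [h.sesq_last, lambdaEval_total_shift]
  | cast i => rw [h.sesq_castSucc, map_neg, lambdaEval_X_smul]

theorem lambdaEval_comp_perm (h : IsLambdaBracket R C) (a : Fin (k + 1) → A)
    (σ : Equiv.Perm (Fin (k + 1))) (Λ : Fin (k + 1) → S) :
    lambdaEval R (Λ ∘ σ) (C (a ∘ σ))
      = ((Equiv.Perm.sign σ : ℤˣ) : ℤ) • lambdaEval R Λ (C a) := by
  rw [h.skew a σ, map_zsmul, lambdaEval_dag_rename R (Γ := Λ ∘ σ) (Λ := Λ)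
    (e := σ ∘ Fin.castSucc) rfl (Equiv.sum_comp σ Λ), smul_smul,
    ← Units.val_mul, Int.units_mul_self, Units.val_one, one_smul]

/-- A `(k+1)`-`λ`-bracket as a multilinear map. -/
def toMultilinearMap (h : IsLambdaBracket R C) :
    MultilinearMap F (fun _ : Fin (k + 1) => A) (LambdaPoly F k M) where
  toFun := C
  map_update_add' {inst} a i x y := by
    rw [Subsingleton.elim inst (instDecidableEqFin _)]
    exact h.map_update_add a i x y
  map_update_smul' {inst} a i r x := by
    rw [Subsingleton.elim inst (instDecidableEqFin _)]
    exact h.map_update_smul a i r x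

theorem map_coord_zero (h : IsLambdaBracket R C) {a : Fin (k + 1) → A} (i : Fin (k + 1))
    (ha : a i = 0) : C a = 0 :=
  h.toMultilinearMap.map_coord_zero i ha

/-- The value of a `(k+1)`-`λ`-bracket at `λ = Λ`, as a multilinear map. -/
noncomputable def evalMultilinear (h : IsLambdaBracket R C) (Λ : Fin (k + 1) → S) :
    MultilinearMap F (fun _ : Fin (k + 1) => A) (ReducedFamilies S R) :=
  (lambdaEval R Λ).compMultilinearMap h.toMultilinearMap

theorem evalMultilinear_apply (h : IsLambdaBracket R C) (Λ : Fin (k + 1) → S)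
    (a : Fin (k + 1) → A) : h.evalMultilinear Λ a = lambdaEval R Λ (C a) := rfl

variable (S) in
/-- The function of `k+1` symbols defined by a `(k+1)`-`λ`-bracket. -/
noncomputable def symbolCochain (h : IsLambdaBracket R C) (x : Fin (k + 1) → (S ⊗[F] A) × S) :
    ReducedFamilies S R :=
  multilinearBaseChange S (h.evalMultilinear fun i => (x i).2) fun i => (x i).1

theorem symbolCochain_mem_cochains (h : IsLambdaBracket R C) :
    h.symbolCochain S ∈ (symbolSystem S R).cochains (k + 1) := by
  refine SymbolSystem.mem_cochains.2 fun y j Λ => ?_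
  set Γ : Fin (k + 1) → S := Function.update (fun i => (y i).2) j Λ with hΓ
  have hf (p : S ⊗[F] A) : h.symbolCochain S (Function.update y j (p, Λ))
      = (multilinearBaseChange S (h.evalMultilinear Γ)).toLinearMap (fun i => (y i).1) j p := by
    simp only [symbolCochain, Function.apply_update (fun _ (z : (S ⊗[F] A) × S) => z.1),
      Function.apply_update (fun _ (z : (S ⊗[F] A) × S) => z.2)]
    rfl
  simp only [hf]
  refine coe_mem_slot _ fun p => multilinearBaseChange_update_shift (fun a => ?_) _ p
  simpa only [evalMultilinear_apply, hΓ, Function.update_self, Function.update_eq_self] using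
    h.lambdaEval_update_D a j (a j) Γ

theorem symbolCochain_isSkew (h : IsLambdaBracket R C) : IsSkew (h.symbolCochain S) := fun x σ =>
  multilinearBaseChange_comp_perm (f := h.evalMultilinear fun i => (x (σ i)).2)
    (g := h.evalMultilinear fun i => (x i).2)
    (fun a => h.lambdaEval_comp_perm a σ fun i => (x i).2) fun i => (x i).1

theorem symbolCochain_one_tmul (h : IsLambdaBracket R C) (a : Fin (k + 1) → A)
    (Λ : Fin (k + 1) → S) :
    h.symbolCochain S (fun i => (1 ⊗ₜ a i, Λ i)) = lambdaEval R Λ (C a) :=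
  multilinearBaseChange_one_tmul _ a

end IsLambdaBracket

end SymbolCochain

section Represents

variable {F : Type*} [Field F] {A M : Type*} [AddCommGroup A] [Module F A] [AddCommGroup M]
  [Module F M] {L : LCA F A} {R : LCAMod F L M} {S : Type*} [CommRing S] [Algebra F S] {k : ℕ}

/-- The function `E` of symbols takes the values prescribed by `C` on the symbols coming from
elements of `A`. -/
def Represents (E : (Fin (k + 1) → (S ⊗[F] A) × S) → ReducedFamilies S R)
    (C : (Fin (k + 1) → A) → LambdaPoly F k M) : Prop :=
  ∀ a Λ, E (fun i => (1 ⊗ₜ a i, Λ i)) = lambdaEval R Λ (C a)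

/-- The differential of poly-`λ`-brackets. The variable `λ_{k+2}` is kept until the very end,
where `dag` substitutes `-λ₁ - ⋯ - λ_{k+1} - ∂` for it; the last argument then enters on the
same footing as the others. -/
noncomputable def dPoly (R : LCAMod F L M) (C : (Fin (k + 1) → A) → LambdaPoly F k M)
    (a : Fin (k + 2) → A) : LambdaPoly F (k + 1) M :=
  dag R.D (∑ i : Fin (k + 2), (-1 : ℤ) ^ (i : ℕ) • lambdaAct R (X i) (1 ⊗ₜ a i)
        (LambdaPoly.rename (i.succAbove ∘ Fin.castSucc) (C (i.removeNth a)))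
    + ∑ i : Fin (k + 2), ∑ j : Fin (k + 1), if i ≤ j.castSucc then (-1 : ℤ) ^ (k + i + j + 1 : ℕ) •
        (actFinsupp L.adjoint (a i) (a j.succ)).sum fun p b =>
          (X i ^ p : MvPolynomial (Fin (k + 2)) F) • LambdaPoly.rename (i.succAbove ∘ j.succAbove)
            (C (Fin.snoc (j.removeNth (i.removeNth a)) b)) else 0)

namespace Represents

variable {E : (Fin (k + 1) → (S ⊗[F] A) × S) → ReducedFamilies S R}
  {C : (Fin (k + 1) → A) → LambdaPoly F k M}

theorem update (h : Represents E C) (a : Fin (k + 1) → A) (Λ : Fin (k + 1) → S)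
    (j : Fin (k + 1)) (x : A) :
    E (Function.update (fun i => (1 ⊗ₜ a i, Λ i)) j (1 ⊗ₜ x, Λ j))
      = lambdaEval R Λ (C (Function.update a j x)) := by
  rw [← h]
  refine congrArg E (funext fun i => ?_)
  obtain rfl | hij := eq_or_ne i j <;> simp [*]

theorem snoc (h : Represents E C) (a : Fin k → A) (Λ : Fin k → S) (b : A) (Γ : S) :
    E (Fin.snoc (fun i => (1 ⊗ₜ a i, Λ i)) (1 ⊗ₜ b, Γ))
      = lambdaEval R (Fin.snoc Λ Γ : Fin (k + 1) → S) (C (Fin.snoc a b)) := by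
  rw [← h]
  refine congrArg E (funext fun i => ?_)
  induction i using Fin.lastCases <;> simp

theorem snoc_bracket (h : Represents E C) (hE : E ∈ (symbolSystem S R).cochains (k + 1))
    (a : Fin k → A) (Λ : Fin k → S) (x y : A) (s Γ : S) :
    E (Fin.snoc (fun i => (1 ⊗ₜ a i, Λ i)) (lambdaAct L.adjoint s (1 ⊗ₜ x) (1 ⊗ₜ y), Γ))
      = (actFinsupp L.adjoint x y).sum fun p b =>
          s ^ p • lambdaEval R (Fin.snoc Λ Γ : Fin (k + 1) → S) (C (Fin.snoc a b)) := by
  obtain ⟨φ, -, hφ⟩ := SymbolSystem.mem_cochains.1 hE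
    (Fin.snoc (fun i => (1 ⊗ₜ a i, Λ i)) (0, 0)) (Fin.last k) Γ
  replace hφ (p : S ⊗[F] A) : E (Fin.snoc (fun i => (1 ⊗ₜ a i, Λ i)) (p, Γ)) = φ p :=
    (congrArg E (Fin.update_snoc_last ..)).symm.trans (congrFun hφ p).symm
  simp only [← h.snoc, hφ, lambdaAct_one_tmul, map_finsuppSum, ← map_smul, TensorProduct.smul_tmul',
    smul_eq_mul, mul_one]

theorem d (h : Represents E C) (hE : E ∈ (symbolSystem S R).cochains (k + 1)) (hskew : IsSkew E) :
    Represents ((symbolSystem S R).d E) (dPoly R C) := by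
  intro a Λ
  rw [hskew.d_apply, dPoly, map_add, map_add]
  simp only [map_sum, map_zsmul, lambdaEval_dag_lambdaAct, apply_ite (dag R.D),
    apply_ite (lambdaEval R Λ), map_zero, map_finsuppSum, lambdaEval_dag_X_smul]
  refine congrArg₂ _ (Finset.sum_congr rfl fun i _ => ?_)
    (Finset.sum_congr rfl fun i _ => Finset.sum_congr rfl fun j _ => ?_)
  · exact congrArg _ (congrArg _ (h _ _))
  · refine ite_congr rfl (fun hij => ?_) fun _ => rfl
    refine congrArg _ ((h.snoc_bracket hE (j.removeNth (i.removeNth a))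
      (j.removeNth (i.removeNth Λ)) (a i) (a j.succ) (Λ i) (Λ i + Λ j.succ)).trans ?_)
    refine Finsupp.sum_congr fun p _ => congrArg _ (Eq.symm ?_)
    refine lambdaEval_dag_rename R (e := i.succAbove ∘ j.succAbove) (Fin.init_snoc _ _) ?_ _
    rw [Fin.sum_snoc, Fin.sum_univ_succAbove Λ i, Fin.sum_univ_succAbove _ j,
      Fin.succAbove_of_le_castSucc _ _ hij, add_comm, add_assoc]
    rfl

end Represents

theorem IsLambdaBracket.of_represents {C : (Fin (k + 1) → A) → LambdaPoly F k M}
    {E : (Fin (k + 1) → (MvPolynomial (Fin (k + 1)) F ⊗[F] A) × MvPolynomial (Fin (k + 1)) F) →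
      ReducedFamilies (MvPolynomial (Fin (k + 1)) F) R} (h : Represents E C)
    (hE : E ∈ (symbolSystem _ R).cochains (k + 1)) (hskew : IsSkew E) : IsLambdaBracket R C := by
  have hslot (a : Fin (k + 1) → A) (j : Fin (k + 1)) :
      ∃ φ : A →ₗ[F] ReducedFamilies (MvPolynomial (Fin (k + 1)) F) R,
        (∀ x, φ (L.D x) = -((X j : MvPolynomial (Fin (k + 1)) F) • φ x)) ∧
          ∀ x, lambdaEval R X (C (Function.update a j x)) = φ x := by
    obtain ⟨φ, hφ, hφE⟩ := SymbolSystem.mem_cochains.1 hE (fun i => (1 ⊗ₜ a i, X i)) j (X j)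
    refine ⟨φ.restrictScalars F ∘ₗ TensorProduct.mk F _ A 1, fun x => ?_, fun x => ?_⟩
    · refine eq_neg_of_add_eq_zero_left (.trans ?_ (LinearMap.congr_fun hφ (1 ⊗ₜ x)))
      exact ((map_add φ _ _).trans (congrArg _ (map_smul φ _ _))).symm
    · exact (h.update a X j x).symm.trans (congrFun hφE _).symm
  have hinj := lambdaEval_X_injective (k := k) R
  refine ⟨fun a i x y => hinj ?_, fun a i r x => hinj ?_, fun a i x => hinj ?_,
    fun a x => hinj ?_, fun a σ => hinj ?_⟩
  · obtain ⟨φ, -, hφ⟩ := hslot a i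
    simp only [map_add, hφ]
  · obtain ⟨φ, -, hφ⟩ := hslot a i
    simp only [map_smul, hφ]
  · obtain ⟨φ, hD, hφ⟩ := hslot a i.castSucc
    rw [map_neg, lambdaEval_X_smul, hφ, hφ, hD]
  · obtain ⟨φ, hD, hφ⟩ := hslot a (Fin.last k)
    rw [lambdaEval_total_shift, hφ, hφ, hD]
  · rw [map_zsmul, lambdaEval_dag_rename R (Γ := X ∘ σ) (Λ := X) (e := σ ∘ Fin.castSucc) rfl
      (Equiv.sum_comp σ (X : _ → MvPolynomial (Fin (k + 1)) F)), ← h, ← h]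
    refine Eq.trans ?_ (congrArg _ (hskew (fun i => (1 ⊗ₜ a i, X i)) σ).symm)
    rw [smul_smul, ← Units.val_mul, Int.units_mul_self, Units.val_one, one_smul]

variable {C : (Fin (k + 1) → A) → LambdaPoly F k M}

theorem IsLambdaBracket.represents (h : IsLambdaBracket R C) :
    Represents (h.symbolCochain S) C := h.symbolCochain_one_tmul

theorem IsLambdaBracket.dPoly (h : IsLambdaBracket R C) : IsLambdaBracket R (dPoly R C) :=
  of_represents (h.represents.d h.symbolCochain_mem_cochains h.symbolCochain_isSkew)
    (SymbolSystem.d_mem_cochains h.symbolCochain_mem_cochains)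
    (h.symbolCochain_isSkew.d h.symbolCochain_mem_cochains)

theorem IsLambdaBracket.dPoly_dPoly (h : IsLambdaBracket R C) :
    LCC.dPoly R (LCC.dPoly R C) = 0 := by
  set S := MvPolynomial (Fin (k + 3)) F
  have hE := h.symbolCochain_mem_cochains (S := S)
  have hskew := h.symbolCochain_isSkew (S := S)
  have hdd := (h.represents.d hE hskew).d (SymbolSystem.d_mem_cochains hE) (hskew.d hE)
  refine funext fun a => lambdaEval_X_injective R ?_
  rw [← hdd, SymbolSystem.d_d hE, Pi.zero_apply, Pi.zero_apply, map_zero]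

end Represents

/-! ### Comparison with the coefficient formulas -/

section RemoveNth

variable {α : Type*} {k : ℕ}

theorem rm1_eq_removeNth (i : Fin (k + 1)) (a : Fin (k + 1) → α) :
    rm1 (i : ℕ) a = i.removeNth a := by
  refine funext fun r => congrArg a (Fin.ext ?_)
  simp only [skip1, Fin.succAbove, Fin.lt_def, Fin.val_castSucc]
  split_ifs <;> rfl

theorem rm2_eq_removeNth_removeNth {i : Fin (k + 2)} {j : Fin (k + 1)} (hij : i ≤ j.castSucc)
    (a : Fin (k + 2) → α) : rm2 (i : ℕ) (j.succ : ℕ) a = j.removeNth (i.removeNth a) := by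
  refine funext fun r => congrArg a (Fin.ext ?_)
  simp only [Fin.le_def, Fin.val_castSucc] at hij
  simp only [skip2, Fin.succAbove, Fin.lt_def, Fin.val_castSucc, Fin.val_succ]
  split_ifs <;> simp only [Fin.val_castSucc, Fin.val_succ] at * <;> lia

theorem castSucc_removeNth_snoc (i : Fin (k + 1)) (a : Fin (k + 1) → α) (x : α) :
    i.castSucc.removeNth (Fin.snoc a x : Fin (k + 2) → α) = Fin.snoc (i.removeNth a) x := by
  funext r
  induction r using Fin.lastCases with
  | last => simp [Fin.removeNth]
  | cast r => simp [Fin.removeNth, Fin.castSucc_succAbove_castSucc]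

end RemoveNth

section Coefficients

variable {F : Type*} [Field F] {A M : Type*} [AddCommGroup A] [Module F A] [AddCommGroup M]
  [Module F M] {L : LCA F A} {k : ℕ}

theorem LambdaPoly.rename_comp {K K' K'' : ℕ} (e : Fin K → Fin K') (e' : Fin K' → Fin K'')
    (φ : LambdaPoly F K M) :
    LambdaPoly.rename (e' ∘ e) φ = LambdaPoly.rename e' (LambdaPoly.rename e φ) := by
  rw [changeScalars_changeScalars]
  exact congrArg (changeScalars M · φ) (MvPolynomial.algHom_ext fun i => by simp)

theorem castSucc_succAbove_comp_castSucc (i : Fin (k + 1)) :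
    i.castSucc.succAbove ∘ Fin.castSucc = Fin.castSucc ∘ i.succAbove :=
  funext fun _ => Fin.castSucc_succAbove_castSucc

theorem lambdaCoeff_dag_lambdaAct_castSucc (R : LCAMod F L M) (i : Fin (k + 1)) (a : A)
    (φ : LambdaPoly F k M) (ν : Fin (k + 1) → ℕ) :
    lambdaCoeff ν (dag R.D (lambdaAct R (X i.castSucc) (1 ⊗ₜ a)
        (LambdaPoly.rename (i.castSucc.succAbove ∘ Fin.castSucc) φ)))
      = R.act a (lambdaCoeff (i.removeNth ν) φ) (ν i) := by
  have hrename : lambdaAct R (X i.castSucc) (1 ⊗ₜ a)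
      (LambdaPoly.rename (i.castSucc.succAbove ∘ Fin.castSucc) φ)
      = LambdaPoly.rename Fin.castSucc
          (lambdaAct R (X i) (1 ⊗ₜ a) (LambdaPoly.rename i.succAbove φ)) := by
    rw [castSucc_succAbove_comp_castSucc, LambdaPoly.rename_comp, changeScalars_lambdaAct,
      changeScalars_tmul, map_one, MvPolynomial.rename_X]
  rw [hrename, dag_rename_castSucc, lambdaCoeff_lambdaAct]

theorem lambdaCoeff_dag_lambdaAct_last (R : LCAMod F L M) (a : A) (φ : LambdaPoly F k M)
    (ν : Fin (k + 1) → ℕ) :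
    lambdaCoeff ν (dag R.D (lambdaAct R (X (Fin.last (k + 1))) (1 ⊗ₜ a)
        (LambdaPoly.rename ((Fin.last (k + 1)).succAbove ∘ Fin.castSucc) φ)))
      = substDag R.D (fun ρ n => if ρ (Fin.last k) = 0 then
          R.act a (lambdaCoeff (Fin.init ρ) φ) n else 0) ν := by
  rw [LambdaPoly.rename_comp, lambdaCoeff_dag]
  congr 1
  funext ρ n
  rw [lambdaCoeff_lambdaAct, Fin.removeNth_last, Fin.init_snoc, Fin.snoc_last, ← Fin.succAbove_last,
    lambdaCoeff_rename_succAbove, Fin.removeNth_last]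
  split_ifs <;> simp

theorem lambdaCoeff_dag_X_castSucc_pow_smul (D : M →ₗ[F] M) (i : Fin k) (p : ℕ)
    (φ : LambdaPoly F (k + 1) M) (ν : Fin k → ℕ) :
    lambdaCoeff ν (dag D ((X i.castSucc ^ p : MvPolynomial (Fin (k + 1)) F) • φ))
      = if p ≤ ν i then lambdaCoeff (Function.update ν i (ν i - p)) (dag D φ) else 0 := by
  have hdag : dag D ((X i.castSucc ^ p : MvPolynomial (Fin (k + 1)) F) • φ)
      = (X i ^ p : MvPolynomial (Fin k) F) • dag D φ := by
    induction p with
    | zero => simp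
    | succ p ih => rw [pow_succ', mul_smul, dag_X_castSucc_smul, ih, smul_smul, pow_succ']
  rw [hdag, lambdaCoeff_X_pow_smul]

variable {R : LCAMod F L M} {C : (Fin (k + 1) → A) → LambdaPoly F k M}

namespace IsLambdaBracket

theorem lambdaCoeff_bracket_sum (h : IsLambdaBracket R C) (i : Fin (k + 1)) (x y : A)
    (a : Fin k → A) (e : Fin k → Fin (k + 2)) (ν : Fin (k + 1) → ℕ) :
    lambdaCoeff ν (dag R.D ((actFinsupp L.adjoint x y).sum fun p b =>
        (X i.castSucc ^ p : MvPolynomial (Fin (k + 2)) F) •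
          LambdaPoly.rename e (C (Fin.snoc a b))))
      = ∑ p ∈ Finset.range (ν i + 1), lambdaCoeff (Function.update ν i (ν i - p))
          (dag R.D (LambdaPoly.rename e (C (Fin.snoc a (L.br x y p))))) := by
  simp only [map_finsuppSum, lambdaCoeff_dag_X_castSucc_pow_smul]
  refine finsuppSum_ite_le _ _ (g := fun p b => lambdaCoeff (Function.update ν i (ν i - p))
    (dag R.D (LambdaPoly.rename e (C (Fin.snoc a b))))) fun p => ?_
  rw [h.map_coord_zero (Fin.last k) (Fin.snoc_last ..), map_zero, map_zero,
    map_zero]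

theorem lambdaCoeff_bracket_last (h : IsLambdaBracket R C) (i : Fin (k + 1)) (x y : A)
    (a : Fin k → A) (ν : Fin (k + 1) → ℕ) :
    lambdaCoeff ν (dag R.D ((actFinsupp L.adjoint x y).sum fun p b =>
        (X i.castSucc ^ p : MvPolynomial (Fin (k + 2)) F) •
          LambdaPoly.rename (i.castSucc.succAbove ∘ (Fin.last k).succAbove) (C (Fin.snoc a b))))
      = lambdaCoeff (i.removeNth ν) (C (Fin.snoc a (L.br x y (ν i)))) := by
  rw [h.lambdaCoeff_bracket_sum, Fin.succAbove_last, castSucc_succAbove_comp_castSucc]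
  simp only [LambdaPoly.rename_comp, dag_rename_castSucc, lambdaCoeff_rename_succAbove,
    Function.update_self, Fin.removeNth_update]
  rw [Finset.sum_eq_single_of_mem (ν i) (Finset.self_mem_range_succ _) fun p hp hpi => ?_]
  · simp
  · rw [Finset.mem_range] at hp
    exact if_neg (by lia)

end IsLambdaBracket

theorem lambdaCoeff_dag_rename_succAbove_comp (D : M →ₗ[F] M) {i : Fin (k + 2)} {j : Fin (k + 1)}
    (hij : i ≤ j.castSucc) (φ : LambdaPoly F (k + 1) M) (ν : Fin (k + 2) → ℕ) :
    lambdaCoeff ν (dag D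
        (LambdaPoly.rename (i.castSucc.succAbove ∘ j.castSucc.succAbove) φ))
      = substDag D (fun ρ n => if ρ i = 0 ∧ ρ j.succ = 0 then
          lambdaCoeff (Fin.snoc (rm2 i j.succ ρ) n : Fin (k + 1) → ℕ) φ else 0) ν := by
  rw [LambdaPoly.rename_comp, lambdaCoeff_dag]
  congr 1
  funext ρ n
  rw [lambdaCoeff_rename_succAbove, lambdaCoeff_rename_succAbove, castSucc_removeNth_snoc,
    castSucc_removeNth_snoc, ite_and, Fin.snoc_castSucc, Fin.snoc_castSucc,
    rm2_eq_removeNth_removeNth hij, Fin.removeNth_apply, Fin.succAbove_of_le_castSucc _ _ hij]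

theorem neg_one_pow_zsmul (n : ℕ) (v : M) : (-1 : ℤ) ^ n • v = (-1 : F) ^ n • v := by
  rw [← Int.cast_smul_eq_zsmul F, Int.cast_pow, Int.cast_neg, Int.cast_one]

theorem IsLambdaBracket.lambdaCoeff_pairs (h : IsLambdaBracket R C) (a : Fin (k + 2) → A)
    (ν : Fin (k + 1) → ℕ) :
    (∑ i : Fin (k + 1), ∑ j : Fin k, if i ≤ j.castSucc then (-1 : ℤ) ^ (k + i + j + 1 : ℕ) •
        lambdaCoeff ν (dag R.D ((actFinsupp L.adjoint (a i.castSucc) (a j.castSucc.succ)).sum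
          fun p b => (X i.castSucc ^ p : MvPolynomial (Fin (k + 2)) F) •
            LambdaPoly.rename (i.castSucc.succAbove ∘ j.castSucc.succAbove)
              (C (Fin.snoc (j.castSucc.removeNth (i.castSucc.removeNth a)) b)))) else 0)
      = dPair L R (fun a ν => lambdaCoeff ν (C a)) a ν := by
  cases k with
  | zero => simp [dPair]
  | succ s =>
    refine Finset.sum_congr rfl fun i _ => ?_
    refine .trans ?_ (Fin.sum_univ_succ _).symm
    rw [if_neg (Fin.not_lt_zero i), zero_add]
    refine Finset.sum_congr rfl fun j _ => ?_
    refine ite_congr (propext Fin.le_castSucc_iff) (fun hij => ?_) fun _ => rfl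
    rw [← Fin.le_castSucc_iff] at hij
    have ha : j.castSucc.removeNth (i.castSucc.removeNth a)
        = Fin.snoc (rm2 i j.succ (Fin.init a)) (a (Fin.last _)) := by
      rw [rm2_eq_removeNth_removeNth hij, ← castSucc_removeNth_snoc, ← castSucc_removeNth_snoc,
        Fin.snoc_init_self]
    rw [h.lambdaCoeff_bracket_sum, neg_one_pow_zsmul (F := F), ha]
    simp only [lambdaCoeff_dag_rename_succAbove_comp R.D hij]
    congr 2
    simp only [Fin.val_succ]
    ring

theorem lambdaCoeff_dag_sum_lambdaAct (C : (Fin (k + 1) → A) → LambdaPoly F k M)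
    (a : Fin (k + 2) → A) (ν : Fin (k + 1) → ℕ) :
    lambdaCoeff ν (dag R.D (∑ i : Fin (k + 2), (-1 : ℤ) ^ (i : ℕ) • lambdaAct R (X i) (1 ⊗ₜ a i)
        (LambdaPoly.rename (i.succAbove ∘ Fin.castSucc) (C (i.removeNth a)))))
      = (∑ i : Fin (k + 1), (-1 : F) ^ (i : ℕ) •
          R.act (a i.castSucc) (lambdaCoeff (rm1 i ν) (C (rm1 i a))) (ν i))
        + (-1 : F) ^ (k + 1) • substDag R.D (fun ρ n => if ρ (Fin.last k) = 0 then
            R.act (a (Fin.last (k + 1))) (lambdaCoeff (Fin.init ρ) (C (Fin.init a))) n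
          else 0) ν := by
  simp only [map_sum, map_zsmul]
  rw [Fin.sum_univ_castSucc, lambdaCoeff_dag_lambdaAct_last, Fin.removeNth_last, Fin.val_last,
    neg_one_pow_zsmul (F := F)]
  refine congrArg₂ _ (Finset.sum_congr rfl fun i _ => ?_) rfl
  rw [lambdaCoeff_dag_lambdaAct_castSucc, neg_one_pow_zsmul (F := F), ← rm1_eq_removeNth i ν,
    ← rm1_eq_removeNth i.castSucc a, Fin.val_castSucc]

theorem IsLambdaBracket.lambdaCoeff_dag_sum_bracket (h : IsLambdaBracket R C)
    (a : Fin (k + 2) → A) (ν : Fin (k + 1) → ℕ) :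
    lambdaCoeff ν (dag R.D (∑ i : Fin (k + 2), ∑ j : Fin (k + 1), if i ≤ j.castSucc then
        (-1 : ℤ) ^ (k + i + j + 1 : ℕ) • (actFinsupp L.adjoint (a i) (a j.succ)).sum fun p b =>
          (X i ^ p : MvPolynomial (Fin (k + 2)) F) • LambdaPoly.rename (i.succAbove ∘ j.succAbove)
            (C (Fin.snoc (j.removeNth (i.removeNth a)) b)) else 0))
      = dPair L R (fun a ν => lambdaCoeff ν (C a)) a ν
        + ∑ i : Fin (k + 1), (-1 : F) ^ (i + 1 : ℕ) • lambdaCoeff (rm1 i ν) (C (Fin.snoc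
            (rm1 i (Fin.init a)) (L.br (a i.castSucc) (a (Fin.last (k + 1))) (ν i)))) := by
  rw [← h.lambdaCoeff_pairs, ← Finset.sum_add_distrib, Fin.sum_univ_castSucc,
    Finset.sum_eq_zero fun j _ => if_neg (not_le.2 (Fin.castSucc_lt_last j)), add_zero]
  simp only [map_sum]
  refine Finset.sum_congr rfl fun i _ => (Fin.sum_univ_castSucc _).trans (congrArg₂ _ ?_ ?_)
  · simp only [Fin.castSucc_le_castSucc_iff, apply_ite (dag R.D), apply_ite (lambdaCoeff ν),
      map_zsmul, map_zero, Fin.val_castSucc]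
  · have ha : (Fin.last k).removeNth (i.castSucc.removeNth a) = rm1 i (Fin.init a) := by
      rw [← Fin.snoc_init_self a, castSucc_removeNth_snoc, Fin.removeNth_last, Fin.init_snoc,
        Fin.init_snoc, rm1_eq_removeNth]
    rw [if_pos (Fin.castSucc_le_castSucc_iff.2 (Fin.le_last i)), map_zsmul, map_zsmul,
      Fin.succ_last, h.lambdaCoeff_bracket_last, neg_one_pow_zsmul (F := F), ha,
      rm1_eq_removeNth i ν]
    refine congrArg (· • _) ?_
    rw [Fin.val_castSucc, Fin.val_last, show k + i + k + 1 = i + 1 + 2 * k by ring,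
      pow_add _ _ (2 * k), pow_mul, neg_one_sq, one_pow, mul_one]

theorem IsLambdaBracket.dRaw_lambdaCoeff (h : IsLambdaBracket R C) :
    dRaw L R (fun a ν => lambdaCoeff ν (C a)) = fun a ν => lambdaCoeff ν (LCC.dPoly R C a) := by
  funext a ν
  rw [LCC.dPoly, map_add, map_add, lambdaCoeff_dag_sum_lambdaAct, h.lambdaCoeff_dag_sum_bracket,
    dRaw]
  abel

end Coefficients

section Main

variable {F : Type*} [Field F] {A M : Type*} [AddCommGroup A] [Module F A] [AddCommGroup M]
  [Module F M] {L : LCA F A} {R : LCAMod F L M} {k : ℕ}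

theorem IsCBr.exists_isLambdaBracket {c : (Fin (k + 1) → A) → (Fin k → ℕ) → M}
    (h : IsCBr R k c) :
    ∃ C : (Fin (k + 1) → A) → LambdaPoly F k M,
      IsLambdaBracket R C ∧ c = fun a ν => lambdaCoeff ν (C a) := by
  have hc : c = fun a ν => lambdaCoeff ν
      ((lambdaCoeffEquiv (F := F)).symm (Finsupp.ofSupportFinite (c a) (h.fin a))) := by
    funext a ν
    simp [lambdaCoeff, Finsupp.ofSupportFinite_coe]
  exact ⟨_, isLambdaBracket_iff.2 (hc ▸ h), hc⟩

/-- The differential `(d∫m)(a) = a_{-∂} m` of the `0`-cochain `∫m`, as a `1`-`λ`-bracket. -/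
noncomputable def dZeroPoly (R : LCAMod F L M) (m : M) (a : Fin 1 → A) : LambdaPoly F 0 M :=
  dag R.D (lambdaAct R (X (Fin.last 0)) (1 ⊗ₜ a 0) (1 ⊗ₜ m))

theorem dZero_eq_lambdaCoeff (R : LCAMod F L M) (m : M) :
    dZero R m = fun a ν => lambdaCoeff ν (dZeroPoly R m a) := by
  funext a ν
  rw [dZeroPoly, lambdaCoeff_dag_lambdaAct_one_tmul, dZero]
  simp [wt, mnom_eq]

variable {S : Type*} [CommRing S] [Algebra F S]

theorem represents_dZeroPoly (R : LCAMod F L M) (m : M) :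
    Represents ((symbolSystem S R).d (k := 0) fun _ => component R 0 (1 ⊗ₜ m)) (dZeroPoly R m) := by
  intro a Λ
  rw [SymbolSystem.d_apply, dZeroPoly, lambdaEval_dag, changeScalars_lambdaAct]
  simp [act_component, changeScalars_tmul]

theorem mem_cochains_zero (E : (Fin 0 → (S ⊗[F] A) × S) → ReducedFamilies S R) :
    E ∈ (symbolSystem S R).cochains 0 :=
  SymbolSystem.mem_cochains.2 fun _ j => j.elim0

theorem isLambdaBracket_dZeroPoly (R : LCAMod F L M) (m : M) :
    IsLambdaBracket R (dZeroPoly R m) :=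
  .of_represents (represents_dZeroPoly R m) (SymbolSystem.d_mem_cochains (mem_cochains_zero _))
    ((IsSkew.of_subsingleton _).d (mem_cochains_zero _))

theorem dPoly_dZeroPoly (R : LCAMod F L M) (m : M) : dPoly R (dZeroPoly R m) = 0 := by
  have hE := mem_cochains_zero (S := MvPolynomial (Fin 2) F) (R := R)
    fun _ => component R 0 (1 ⊗ₜ m)
  have hd := (represents_dZeroPoly R m).d (SymbolSystem.d_mem_cochains hE)
    ((IsSkew.of_subsingleton _).d hE)
  refine funext fun a => lambdaEval_X_injective R ?_
  rw [← hd, SymbolSystem.d_d hE, Pi.zero_apply, Pi.zero_apply, map_zero]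

end Main

end LCC

open LCC in
theorem d_closed_and_d_squared_zero_general
    {F : Type*} [Field F]
    {A M : Type*} [AddCommGroup A] [Module F A] [AddCommGroup M] [Module F M]
    (L : LCA F A) (R : LCAMod F L M) :
    (∀ m : M, IsCBr R 0 (dZero R m) ∧ dRaw L R (dZero R m) = 0) ∧
    (∀ (k : ℕ) (c : (Fin (k + 1) → A) → (Fin k → ℕ) → M), IsCBr R k c →
      IsCBr R (k + 1) (dRaw L R c) ∧ dRaw L R (dRaw L R c) = 0) := by
  refine ⟨fun m => ?_, fun k c hc => ?_⟩
  · have h := isLambdaBracket_dZeroPoly R m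
    rw [dZero_eq_lambdaCoeff, ← isLambdaBracket_iff, h.dRaw_lambdaCoeff, dPoly_dZeroPoly]
    exact ⟨h, funext₂ fun _ ν => map_zero (lambdaCoeff ν)⟩
  · obtain ⟨C, h, rfl⟩ := hc.exists_isLambdaBracket
    rw [h.dRaw_lambdaCoeff, ← isLambdaBracket_iff, h.dPoly.dRaw_lambdaCoeff, h.dPoly_dPoly]
    exact ⟨h.dPoly, funext₂ fun _ ν => map_zero (lambdaCoeff ν)⟩

open LCC in
/-- For every `k ≥ 0` and every `c ∈ C^k(A,M)`, the element `dc`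
lies in `C^{k+1}(A,M)` (it satisfies conditions B1, B2, B3) and `d(dc) = 0`.
Hence `(C^•(A,M), d)` is a cohomology complex.  (Here `C⁰ = M/∂^M M` is treated via
representatives `m : M`, with `(d∫m)(a) = a_{−∂^M} m`, and a `(k+1)`-`λ`-bracket
is recorded through the coefficients of its `λ`-expansion.) -/
theorem d_closed_and_d_squared_zero
    {F : Type*} [Field F] [CharZero F]
    {A M : Type*} [AddCommGroup A] [Module F A] [AddCommGroup M] [Module F M]
    (L : LCA F A) (R : LCAMod F L M) :
    (∀ m : M, IsCBr R 0 (dZero R m) ∧ dRaw L R (dZero R m) = 0) ∧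
    (∀ (k : ℕ) (c : (Fin (k+1) → A) → (Fin k → ℕ) → M), IsCBr R k c →
      IsCBr R (k+1) (dRaw L R c) ∧ dRaw L R (dRaw L R c) = 0) :=
  d_closed_and_d_squared_zero_general L R
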